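/- For every natural number n ≥ 0, u₂ⁿ · B[n,0,0,n] · u₁ⁿ = Σ_{(k,l)} q^{g(n,k,l)} [n−k; l][n−l; k] p₁^{n−k} u₂^{2k} u₁^{2l} p₀^{n−l}, where the sum runs over all pairs (k,l) ∈ ℕ² with k + l ≤ n, and g(n,k,l) = n(n−3) + k(n+1) + l(n+1) − 2kl. -/

import Mathlib

noncomputable section

abbrev F : Type := RatFunc ℚ

/-- The deformation parameter `q`. -/
def qq : F := RatFunc.X

/-- The quantum integer `[3] = q² + 1 + q⁻²`. -/
def box3 : F := qq ^ 2 + 1 + (qq⁻¹) ^ 2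

/-- The generators `E₁, E₂` of the free algebra. -/
def gen (i : Fin 2) : FreeAlgebra F (Fin 2) := FreeAlgebra.ι F i

/-- The quantized Serre relations. -/
inductive SerreRel : FreeAlgebra F (Fin 2) → FreeAlgebra F (Fin 2) → Prop
  | rel1 : SerreRel
      (gen 0 ^ 3 * gen 1 - box3 • (gen 0 ^ 2 * gen 1 * gen 0)
        + box3 • (gen 0 * gen 1 * gen 0 ^ 2) - gen 1 * gen 0 ^ 3) 0
  | rel2 : SerreRel
      (gen 1 ^ 3 * gen 0 - box3 • (gen 1 ^ 2 * gen 0 * gen 1)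
        + box3 • (gen 1 * gen 0 * gen 1 ^ 2) - gen 0 * gen 1 ^ 3) 0

/-- `U = U_q(𝔫)`, the free algebra on `E₁, E₂` modulo the quantized Serre relations. -/
abbrev U : Type := RingQuot SerreRel

def E1 : U := RingQuot.mkAlgHom F SerreRel (gen 0)
def E2 : U := RingQuot.mkAlgHom F SerreRel (gen 1)

/-- `A = (1/(q+q⁻¹))(E₂E₁ − q⁻²E₁E₂)`. -/
def Aelt : U := (qq + qq⁻¹)⁻¹ • (E2 * E1 - (qq⁻¹) ^ 2 • (E1 * E2))

def v0 : U := E1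
def v1 : U := Aelt * v0 - v0 * Aelt
def v2 : U := Aelt * v1 - v1 * Aelt
def v3 : U := Aelt * v2 - v2 * Aelt

/-- `uᵢ = (1 − q⁻²)⁻²ⁱ vᵢ`. -/
def u0 : U := v0
def u1 : U := ((1 - (qq⁻¹) ^ 2)⁻¹) ^ 2 • v1
def u2 : U := ((1 - (qq⁻¹) ^ 2)⁻¹) ^ 4 • v2
def u3 : U := ((1 - (qq⁻¹) ^ 2)⁻¹) ^ 6 • v3

/-- `p₁ = u₃u₁ − q²u₂²`. -/
def p1 : U := u3 * u1 - qq ^ 2 • u2 ^ 2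
/-- `p₀ = u₂u₀ − q²u₁²`. -/
def p0 : U := u2 * u0 - qq ^ 2 • u1 ^ 2

/-- `S`, the subalgebra of `U` generated by `u₀, u₁, u₂, u₃`. -/
abbrev Sgen : Subalgebra F U := Algebra.adjoin F ({u0, u1, u2, u3} : Set U)

def us0 : Sgen := ⟨u0, Algebra.subset_adjoin (by simp)⟩
def us1 : Sgen := ⟨u1, Algebra.subset_adjoin (by simp)⟩
def us2 : Sgen := ⟨u2, Algebra.subset_adjoin (by simp)⟩
def us3 : Sgen := ⟨u3, Algebra.subset_adjoin (by simp)⟩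

/-- `p₁ = u₃u₁ − q²u₂²` as an element of `S`. -/
def ps1 : Sgen := us3 * us1 - qq ^ 2 • us2 ^ 2
/-- `p₀ = u₂u₀ − q²u₁²` as an element of `S`. -/
def ps0 : Sgen := us2 * us0 - qq ^ 2 • us1 ^ 2

/-- Index quadruples `a = (a₃, a₂, a₁, a₀)`. -/
abbrev Idx : Type := ℕ × ℕ × ℕ × ℕ

/-- The PBW monomial `u₃^{a₃}u₂^{a₂}u₁^{a₁}u₀^{a₀}`. -/
def mon (a : Idx) : Sgen := us3 ^ a.1 * us2 ^ a.2.1 * us1 ^ a.2.2.1 * us0 ^ a.2.2.2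

/-- `b(a) = C(a₃,2)+C(a₂,2)+C(a₁,2)+C(a₀,2)`. -/
def bexp (a : Idx) : ℕ :=
  Nat.choose a.1 2 + Nat.choose a.2.1 2 + Nat.choose a.2.2.1 2 + Nat.choose a.2.2.2 2

/-- The dual PBW basis element `E[a] = q^{b(a)} u₃^{a₃}u₂^{a₂}u₁^{a₁}u₀^{a₀}`. -/
def Ee (a : Idx) : Sgen := qq ^ bexp a • mon a

/-- `N(a) = (a₃+a₂+a₁+a₀)² − 7a₃ − 5a₂ − 3a₁ − a₀`. -/
def Nnum (a : Idx) : ℤ :=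
  ((a.1 : ℤ) + a.2.1 + a.2.2.1 + a.2.2.2) ^ 2
    - 7 * a.1 - 5 * a.2.1 - 3 * a.2.2.1 - a.2.2.2

/-- `a ⊴ b` iff `b − a ∈ ℕ·(−1,2,−1,0) + ℕ·(0,−1,2,−1)`. -/
def tri (a b : Idx) : Prop :=
  ∃ s r : ℕ,
    (b.1 : ℤ) = a.1 - s ∧
    (b.2.1 : ℤ) = a.2.1 + 2 * s - r ∧
    (b.2.2.1 : ℤ) = a.2.2.1 - s + 2 * r ∧
    (b.2.2.2 : ℤ) = a.2.2.2 - r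

/-- `S(a) = {b ∈ ℕ⁴ : a ⊴ b and a ≠ b}`. -/
def Sset (a : Idx) : Set Idx := {b | tri a b ∧ a ≠ b}

/-- Condition (i): `B[a] − E[a] ∈ Σ_{b ∈ S(a)} qℤ[q]·E[b]`. -/
def cond1 (B : Idx → Sgen) (a : Idx) : Prop :=
  ∃ φ : Idx →₀ Polynomial ℤ,
    (↑φ.support : Set Idx) ⊆ Sset a ∧
    B a - Ee a =
      φ.sum fun b p => (qq * Polynomial.eval₂ (Int.castRingHom F) qq p) • Ee b

/-- Hypotheses on the bar involution of coefficients `bar : q ↦ q⁻¹` and on the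
anti-automorphism `σ` of `S`: `σ` is an additive, anti-multiplicative bijection with
`σ(c(q)·x) = c(q⁻¹)·σ(x)` and `σ(uᵢ) = q^{2i}uᵢ`. -/
def SigmaHyp (bar : F →+* F) (σ : Sgen → Sgen) : Prop :=
  bar qq = qq⁻¹ ∧
  Function.Bijective σ ∧
  (∀ x y : Sgen, σ (x + y) = σ x + σ y) ∧
  (∀ x y : Sgen, σ (x * y) = σ y * σ x) ∧
  (∀ (c : F) (x : Sgen), σ (c • x) = bar c • σ x) ∧
  σ us0 = us0 ∧ σ us1 = qq ^ 2 • us1 ∧ σ us2 = qq ^ 4 • us2 ∧ σ us3 = qq ^ 6 • us3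

/-- The defining properties of the dual canonical basis `B`: for every `a ∈ ℕ⁴`,
`B[a] − E[a] ∈ Σ_{b ∈ S(a)} qℤ[q]·E[b]` and `σ(B[a]) = q^{−N(a)}B[a]`. -/
def DCB (bar : F →+* F) (σ : Sgen → Sgen) (B : Idx → Sgen) : Prop :=
  ∀ a : Idx, cond1 B a ∧ σ (B a) = qq ^ (-Nnum a) • B a

/-- Extension of `B` to integer quadruples by the convention that `B[a] = 0` whenever
some coordinate of `a` is negative. -/
def Bz (B : Idx → Sgen) (a : ℤ × ℤ × ℤ × ℤ) : Sgen :=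
  if 0 ≤ a.1 ∧ 0 ≤ a.2.1 ∧ 0 ≤ a.2.2.1 ∧ 0 ≤ a.2.2.2 then
    B (a.1.toNat, a.2.1.toNat, a.2.2.1.toNat, a.2.2.2.toNat)
  else 0

/-- The quantum integer `[m] = (q^m − q^{−m})/(q − q⁻¹)`. -/
def qint (m : ℤ) : F := (qq ^ m - qq ^ (-m)) / (qq - qq⁻¹)

/-- The quantized factorial `[i]! = [i][i−1]⋯[1]`. -/
def qfact (i : ℕ) : F := ∏ j ∈ Finset.range i, qint ((j : ℤ) + 1)

/-- The quantum binomial coefficient `[m; i] = [m][m−1]⋯[m−i+1]/[i]!`. -/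
def qbinom (m : ℤ) (i : ℕ) : F := (∏ j ∈ Finset.range i, qint (m - j)) / qfact i

/-- `g(n,k,l) = n(n−3) + k(n+1) + l(n+1) − 2kl`. -/
def gexp (n k l : ℕ) : ℤ :=
  (n : ℤ) * ((n : ℤ) - 3) + (k : ℤ) * ((n : ℤ) + 1) + (l : ℤ) * ((n : ℤ) + 1)
    - 2 * (k : ℤ) * (l : ℤ)

set_option linter.unusedSimpArgs false
section gen
variable {K : Type*} [Field K] {R : Type*} [Ring R] [Algebra K R]

lemma gA_rel (q : K) (hq : q ≠ 0) (x0 x1 x2 x3 a X : R) (c : K) (hc : c ≠ 0) (h2 : (2:K) ≠ 0)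
    (d0 : a * x0 - x0 * a = x1) (d1 : a * x1 - x1 * a = x2) (d2 : a * x2 - x2 * a = x3)
    (e0 : X * x0 - x0 * X = c • x2) (e1 : X * x1 - x1 * X = c • x3)
    (h : x1 * x0 = q ^ 2 • (x0 * x1)) :
    x2 * x0 = q ^ 2 • (x0 * x2) + (q ^ 2 - 1) • (x1 * x1) ∧
    x2 * x1 = q ^ 2 • (x1 * x2) ∧
    x3 * x0 = q ^ 2 • (x0 * x3) + (q ^ 2 - (q⁻¹) ^ 2) • (x2 * x1) := by
  have H1 : x2 * x0 + x1 * x1 = q ^ 2 • (x1 * x1 + x0 * x2) := by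
    have := congrArg (fun y => a * y - y * a) h
    rw [← d1, ← d0]
    rw [← d0] at this
    linear_combination (norm := skip) this
    simp only [mul_add, add_mul, mul_sub, sub_mul, smul_mul_assoc, mul_smul_comm, smul_smul, smul_add, smul_sub, mul_assoc]
    module
  have H2 : x3 * x0 + x2 * x1 + (x2 * x1 + x1 * x2) = q ^ 2 • ((x2 * x1 + x1 * x2) + (x1 * x2 + x0 * x3)) := by
    have := congrArg (fun y => a * y - y * a) H1
    rw [← d2]
    linear_combination (norm := skip) this - x2 * d0 - d1 * x1 - x1 * d1 + q^2 • (d1 * x1) + q^2 • (x1 * d1) + q^2 • (d0 * x2)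
    simp only [mul_add, add_mul, mul_sub, sub_mul, smul_mul_assoc, mul_smul_comm, smul_smul, smul_add, smul_sub, mul_assoc]
    module
  have H3 : x3 * x0 + x1 * x2 = q ^ 2 • (x2 * x1 + x0 * x3) := by
    have := congrArg (fun y => X * y - y * X) h
    have h3 : c • (x3 * x0 + x1 * x2) = c • (q ^ 2 • (x2 * x1 + x0 * x3)) := by
      linear_combination (norm := skip) this - e1 * x0 - x1 * e0 + q^2 • (e0 * x1) + q^2 • (x0 * e1)
      simp only [mul_add, add_mul, mul_sub, sub_mul, smul_mul_assoc, mul_smul_comm, smul_smul, smul_add, smul_sub, mul_assoc]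
      module
    have := congrArg (fun y => c⁻¹ • y) h3
    simpa [smul_smul, hc] using this
  have H4 : x2 * x1 = q ^ 2 • (x1 * x2) := by
    have h3 : (2:K) • (x2 * x1) = (2:K) • (q ^ 2 • (x1 * x2)) := by
      linear_combination (norm := module) H2 - H3
    have := congrArg (fun y => (2:K)⁻¹ • y) h3
    simpa [smul_smul, h2] using this
  refine ⟨?_, H4, ?_⟩
  · linear_combination (norm := module) H1
  · linear_combination (norm := skip) H3 + (q⁻¹) ^ 2 • H4
    match_scalars <;> field_simp <;> ring

lemma gSerre (q : K) (hq : q ≠ 0) (h3 : q ^ 2 + 1 + (q⁻¹) ^ 2 ≠ 0) (h2 : (2:K) ≠ 0) (hc : q ^ 2 + (q⁻¹) ^ 2 ≠ 0)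
    (e f : R)
    (S1 : e ^ 3 * f - (q ^ 2 + 1 + (q⁻¹) ^ 2) • (e ^ 2 * f * e)
        + (q ^ 2 + 1 + (q⁻¹) ^ 2) • (e * f * e ^ 2) - f * e ^ 3 = 0)
    (S2 : f ^ 3 * e - (q ^ 2 + 1 + (q⁻¹) ^ 2) • (f ^ 2 * e * f)
        + (q ^ 2 + 1 + (q⁻¹) ^ 2) • (f * e * f ^ 2) - e * f ^ 3 = 0)
    (a x1 x2 x3 : R) (ha : a = f * e - (q⁻¹) ^ 2 • (e * f))
    (d0 : a * e - e * a = x1) (d1 : a * x1 - x1 * a = x2) (d2 : a * x2 - x2 * a = x3) :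
    (x1 * e = q ^ 2 • (e * x1)) ∧ (x2 * x1 = q ^ 2 • (x1 * x2)) ∧ (x3 * x2 = q ^ 2 • (x2 * x3)) ∧
    (x2 * e = q ^ 2 • (e * x2) + (q ^ 2 - 1) • (x1 * x1)) ∧
    (x3 * x1 = q ^ 2 • (x1 * x3) + (q ^ 2 - 1) • (x2 * x2)) ∧
    (x3 * e = q ^ 2 • (e * x3) + (q ^ 2 - (q⁻¹) ^ 2) • (x2 * x1)) := by
  have R10 : x1 * e = q ^ 2 • (e * x1) := by
    subst ha d0
    linear_combination (norm := skip) (-1 : K) • S1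
    simp only [mul_add, add_mul, mul_sub, sub_mul, smul_mul_assoc, mul_smul_comm, smul_smul, smul_add, smul_sub, mul_assoc, pow_succ, pow_zero, one_mul]
    match_scalars <;> field_simp <;> ring
  obtain ⟨g, hg⟩ : ∃ g, g = a * f - f * a := ⟨_, rfl⟩
  have RG : f * g = q ^ 2 • (g * f) := by
    subst ha hg
    linear_combination (norm := skip) (-1 : K) • S2
    simp only [mul_add, add_mul, mul_sub, sub_mul, smul_mul_assoc, mul_smul_comm, smul_smul, smul_add, smul_sub, mul_assoc, pow_succ, pow_zero, one_mul]
    match_scalars <;> field_simp <;> ring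
  obtain ⟨Y, hY⟩ : ∃ Y, Y = f * x1 - (q⁻¹) ^ 2 • (x1 * f) := ⟨_, rfl⟩
  have hY2 : Y = - (g * e - (q⁻¹) ^ 2 • (e * g)) := by
    subst hY hg d0
    subst ha
    simp only [mul_add, add_mul, mul_sub, sub_mul, smul_mul_assoc, mul_smul_comm, smul_smul, smul_add, smul_sub, mul_assoc]
    match_scalars <;> field_simp <;> ring
  have Ye : Y * e - e * Y = q ^ 2 • (a * x1) - (q⁻¹) ^ 2 • (x1 * a) := by
    rw [hY]
    linear_combination (norm := skip) f * R10 - q^2 • (ha * x1) + (q⁻¹)^2 • (x1 * ha) + (-((q⁻¹)^4)) • (R10 * f)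
    simp only [mul_add, add_mul, mul_sub, sub_mul, smul_mul_assoc, mul_smul_comm, smul_smul, smul_add, smul_sub, mul_assoc]
    match_scalars <;> field_simp <;> ring
  have Yf : Y * f - f * Y = q ^ 2 • (g * a) - (q⁻¹) ^ 2 • (a * g) := by
    rw [hY2]
    linear_combination (norm := skip) RG * e - q^2 • (g * ha) + (q⁻¹)^2 • (ha * g) + (-((q⁻¹)^4)) • (e * RG)
    simp only [mul_add, add_mul, mul_sub, sub_mul, smul_mul_assoc, mul_smul_comm, smul_smul, smul_add, smul_sub, mul_assoc, neg_mul, mul_neg, smul_neg]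
    match_scalars <;> field_simp <;> ring
  have Ya : Y * a = a * Y := by
    have key : (q ^ 2 + 1 + (q⁻¹) ^ 2) • (Y * a - a * Y) = 0 := by
      have k1 : Y * a - a * Y = (q ^ 2 • (g * a) - (q⁻¹) ^ 2 • (a * g)) * e + f * (q ^ 2 • (a * x1) - (q⁻¹) ^ 2 • (x1 * a))
          - (q⁻¹)^2 • ((q ^ 2 • (a * x1) - (q⁻¹) ^ 2 • (x1 * a)) * f) - (q⁻¹)^2 • (e * (q ^ 2 • (g * a) - (q⁻¹) ^ 2 • (a * g))) := by
        rw [← Ye, ← Yf]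
        rw [ha]
        simp only [mul_add, add_mul, mul_sub, sub_mul, smul_mul_assoc, mul_smul_comm, smul_smul, smul_add, smul_sub, mul_assoc]
        match_scalars <;> field_simp <;> ring
      have k2 : (q ^ 2 • (g * a) - (q⁻¹) ^ 2 • (a * g)) * e + f * (q ^ 2 • (a * x1) - (q⁻¹) ^ 2 • (x1 * a))
          - (q⁻¹)^2 • ((q ^ 2 • (a * x1) - (q⁻¹) ^ 2 • (x1 * a)) * f) - (q⁻¹)^2 • (e * (q ^ 2 • (g * a) - (q⁻¹) ^ 2 • (a * g)))
          = (-(q^2 + (q⁻¹)^2)) • (Y * a - a * Y) := by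
        have t1 : (-(q^2 + (q⁻¹)^2)) • (Y * a - a * Y) = q^2 • ((g * e - (q⁻¹) ^ 2 • (e * g)) * a) - (q⁻¹)^2 • (a * (g * e - (q⁻¹) ^ 2 • (e * g)))
           + q^2 • (a * (f * x1 - (q⁻¹) ^ 2 • (x1 * f))) - (q⁻¹)^2 • ((f * x1 - (q⁻¹) ^ 2 • (x1 * f)) * a) := by
          rw [← hY]
          have : g * e - (q⁻¹) ^ 2 • (e * g) = - Y := by rw [hY2]; simp
          rw [this, neg_mul, mul_neg]
          module
        rw [t1, hg]
        rw [← d0]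
        simp only [mul_add, add_mul, mul_sub, sub_mul, smul_mul_assoc, mul_smul_comm, smul_smul, smul_add, smul_sub, mul_assoc]
        match_scalars <;> field_simp <;> ring
      rw [k2] at k1
      linear_combination (norm := module) k1
    rcases smul_eq_zero.mp key with h | h
    · exact absurd h h3
    · exact sub_eq_zero.mp h
  obtain ⟨X, hX⟩ : ∃ X, X = Y + ((q⁻¹ ^ 2 - q ^ 2) / 2) • (a * a) := ⟨_, rfl⟩
  obtain ⟨c, hcc⟩ : ∃ c, c = (q ^ 2 + (q⁻¹) ^ 2) / 2 := ⟨_, rfl⟩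
  have hc0 : c ≠ 0 := by rw [hcc]; exact div_ne_zero hc h2
  have Xa : X * a = a * X := by
    rw [hX, add_mul, mul_add, Ya]; simp [mul_assoc]
  have X0 : X * e - e * X = c • x2 := by
    rw [hX, hcc, ← d1]
    linear_combination (norm := skip) Ye + ((q⁻¹ ^ 2 - q ^ 2) / 2) • (a * d0) + ((q⁻¹ ^ 2 - q ^ 2) / 2) • (d0 * a)
    simp only [mul_add, add_mul, mul_sub, sub_mul, smul_mul_assoc, mul_smul_comm, smul_smul, smul_add, smul_sub, mul_assoc]
    match_scalars <;> field_simp <;> ring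
  have step : ∀ y y2 : R, X * y - y * X = c • y2 → X * (a * y - y * a) - (a * y - y * a) * X = c • (a * y2 - y2 * a) := by
    intro y y2 h
    linear_combination (norm := skip) a * h - h * a + Xa * y - y * Xa
    simp only [mul_add, add_mul, mul_sub, sub_mul, smul_mul_assoc, mul_smul_comm, smul_smul, smul_add, smul_sub, mul_assoc]
    module
  have X1 : X * x1 - x1 * X = c • x3 := by
    have := step _ _ X0
    rwa [d0, d2] at this
  have X2 : X * x2 - x2 * X = c • (a * x3 - x3 * a) := by
    have := step _ _ X1
    rwa [d1] at this
  obtain ⟨r20, r21, r30⟩ := gA_rel q hq e x1 x2 x3 a X c hc0 h2 d0 d1 d2 X0 X1 R10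
  obtain ⟨r31, r32, -⟩ := gA_rel q hq x1 x2 x3 _ a X c hc0 h2 d1 d2 rfl X1 X2 r21
  exact ⟨R10, r21, r32, r20, r31, r30⟩
end gen

section gen2
variable {K : Type*} [Field K] {R : Type*} [Ring R] [Algebra K R]

/-- Straightening relations. -/
structure GRel (q : K) (u0 u1 u2 u3 : R) : Prop where
  hq : q ≠ 0
  r01 : u0 * u1 = (q⁻¹) ^ 2 • (u1 * u0)
  r12 : u1 * u2 = (q⁻¹) ^ 2 • (u2 * u1)
  r23 : u2 * u3 = (q⁻¹) ^ 2 • (u3 * u2)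
  r02 : u0 * u2 = (q⁻¹) ^ 2 • (u2 * u0) - (1 - (q⁻¹) ^ 2) • (u1 * u1)
  r13 : u1 * u3 = (q⁻¹) ^ 2 • (u3 * u1) - (1 - (q⁻¹) ^ 2) • (u2 * u2)
  r03 : u0 * u3 = (q⁻¹) ^ 2 • (u3 * u0) - (1 - (q⁻¹) ^ 4) • (u2 * u1)

/-- Second level relations. -/
structure GRel2 (q : K) (u0 u1 u2 u3 p1 p0 z : R) : Prop where
  h00 : p0 * u0 = q ^ 2 • (u0 * p0)
  h01 : p0 * u1 = u1 * p0
  h02 : p0 * u2 = (q⁻¹) ^ 2 • (u2 * p0)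
  h03 : p0 * u3 = (q⁻¹) ^ 4 • (u3 * p0)
  h10 : p1 * u0 = q ^ 4 • (u0 * p1)
  h11 : p1 * u1 = q ^ 2 • (u1 * p1)
  h12 : p1 * u2 = u2 * p1
  h13 : p1 * u3 = (q⁻¹) ^ 2 • (u3 * p1)
  hpp : p0 * p1 = (q⁻¹) ^ 4 • (p1 * p0)
  p1z : p1 * z = q ^ 2 • (z * p1)
  p0z : p0 * z = (q⁻¹) ^ 2 • (z * p0)
  zu1 : z * u1 = q ^ 2 • (u0 * p1) + u2 * p0
  zu2 : z * u2 = (q⁻¹) ^ 2 • (u3 * p0) + u1 * p1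
  zu3 : z * u3 = (q⁻¹) ^ 2 • (u3 * z - q ^ 2 • (p1 * u2)) + (q⁻¹) ^ 2 • (p1 * u2)
  zy1 : z * (u3 * z - q ^ 2 • (p1 * u2)) = (q⁻¹) ^ 2 • ((u3 * z - q ^ 2 • (p1 * u2)) * z - (q⁻¹) ^ 2 • (u3 * (p1 * p0))) + (q⁻¹) ^ 6 • (u3 * (p1 * p0))
  e30 : u3 * u0 = z + q ^ 2 • (u2 * u1)
  e20 : u2 * u0 = p0 + q ^ 2 • (u1 * u1)

lemma gRel2 {q : K} {u0 u1 u2 u3 : R} (h : GRel q u0 u1 u2 u3) :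
    GRel2 q u0 u1 u2 u3 (u3 * u1 - q ^ 2 • u2 ^ 2) (u2 * u0 - q ^ 2 • u1 ^ 2) (u3 * u0 - q ^ 2 • (u2 * u1)) := by
  have hq := h.hq
  have a01 : ∀ w, u0 * (u1 * w) = (q⁻¹) ^ 2 • (u1 * (u0 * w)) := fun w => by
    rw [← mul_assoc, h.r01, smul_mul_assoc, mul_assoc]
  have a12 : ∀ w, u1 * (u2 * w) = (q⁻¹) ^ 2 • (u2 * (u1 * w)) := fun w => by
    rw [← mul_assoc, h.r12, smul_mul_assoc, mul_assoc]
  have a23 : ∀ w, u2 * (u3 * w) = (q⁻¹) ^ 2 • (u3 * (u2 * w)) := fun w => by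
    rw [← mul_assoc, h.r23, smul_mul_assoc, mul_assoc]
  have a02 : ∀ w, u0 * (u2 * w) = (q⁻¹) ^ 2 • (u2 * (u0 * w)) - (1 - (q⁻¹) ^ 2) • (u1 * (u1 * w)) := fun w => by
    rw [← mul_assoc, h.r02, sub_mul, smul_mul_assoc, mul_assoc, smul_mul_assoc, mul_assoc]
  have a13 : ∀ w, u1 * (u3 * w) = (q⁻¹) ^ 2 • (u3 * (u1 * w)) - (1 - (q⁻¹) ^ 2) • (u2 * (u2 * w)) := fun w => by
    rw [← mul_assoc, h.r13, sub_mul, smul_mul_assoc, mul_assoc, smul_mul_assoc, mul_assoc]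
  have a03 : ∀ w, u0 * (u3 * w) = (q⁻¹) ^ 2 • (u3 * (u0 * w)) - (1 - (q⁻¹) ^ 4) • (u2 * (u1 * w)) := fun w => by
    rw [← mul_assoc, h.r03, sub_mul, smul_mul_assoc, mul_assoc, smul_mul_assoc, mul_assoc]
  constructor
  case e30 => simp
  case e20 => simp [pow_two]
  all_goals
    simp only [pow_two u1, pow_two u2, mul_add, add_mul, mul_sub, sub_mul, smul_mul_assoc, mul_smul_comm, smul_smul, smul_add, smul_sub, mul_assoc, h.r01, h.r12, h.r23, h.r02, h.r13, h.r03, a01, a12, a23, a02, a13, a03] <;>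
    (match_scalars <;> field_simp <;> ring)

/-- Chebyshev-type sequence. -/
def gT (q : K) (z P : R) : ℕ → R
  | 0 => 1
  | 1 => z
  | n + 2 => z * gT q z P (n + 1) - (q⁻¹) ^ 2 • (P * gT q z P n)

lemma gT_comm (q : K) (z P : R) (h : P * z = z * P) (n : ℕ) :
    gT q z P n * z = z * gT q z P n ∧ gT q z P n * P = P * gT q z P n := by
  induction n using Nat.twoStepInduction with
  | zero => simp [gT]
  | one => simp [gT, h]
  | more n ih1 ih2 =>
    simp only [gT, sub_mul, mul_sub, smul_mul_assoc, mul_smul_comm]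
    constructor
    · rw [mul_assoc, ih2.1, mul_assoc P, ih1.1, ← mul_assoc P, h, mul_assoc]
    · rw [mul_assoc, ih2.2, ← mul_assoc z, ← h, mul_assoc P z, mul_assoc P (gT q z P n), ih1.2]

lemma gT_right (q : K) (z P : R) (h : P * z = z * P) (n : ℕ) :
    gT q z P (n + 2) = gT q z P (n + 1) * z - (q⁻¹) ^ 2 • (gT q z P n * P) := by
  rw [(gT_comm q z P h _).1, (gT_comm q z P h _).2]; rfl

/-- The right cluster variables. -/
def gy (q : K) (u3 u2 p1 z P : R) : ℕ → R
  | 0 => u3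
  | n + 1 => u3 * gT q z P (n + 1) - q ^ 2 • (p1 * u2 * gT q z P n)

lemma gy_rec (q : K) (u3 u2 p1 z P : R) (h : P * z = z * P) (n : ℕ) :
    gy q u3 u2 p1 z P (n + 3) = gy q u3 u2 p1 z P (n + 2) * z
      - (q⁻¹) ^ 2 • (gy q u3 u2 p1 z P (n + 1) * P) := by
  simp only [gy, gT_right q z P h (n + 1), gT_right q z P h n]
  simp only [mul_add, add_mul, mul_sub, sub_mul, smul_mul_assoc, mul_smul_comm, smul_smul, smul_add, smul_sub, mul_assoc]
  module

section
variable {q : K} {u0 u1 u2 u3 p1 p0 z : R}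

lemma gPz (hq : q ≠ 0) (h : GRel2 q u0 u1 u2 u3 p1 p0 z) : (p1 * p0) * z = z * (p1 * p0) := by
  rw [mul_assoc, h.p0z, mul_smul_comm, ← mul_assoc, h.p1z, smul_mul_assoc, smul_smul, mul_assoc]
  rw [← mul_pow, inv_mul_cancel₀ hq, one_pow, one_smul]

lemma gy_rec1 (hq : q ≠ 0) (h : GRel2 q u0 u1 u2 u3 p1 p0 z) :
    gy q u3 u2 p1 z (p1 * p0) 2 = gy q u3 u2 p1 z (p1 * p0) 1 * z
      - (q⁻¹) ^ 2 • (gy q u3 u2 p1 z (p1 * p0) 0 * (p1 * p0)) := by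
  simp only [gy, gT_right q z _ (gPz hq h) 0]
  simp only [gT, mul_add, add_mul, mul_sub, sub_mul, smul_mul_assoc, mul_smul_comm, smul_smul, smul_add, smul_sub, mul_assoc, zero_add, mul_one, one_mul]
  module

lemma gy_rec' (hq : q ≠ 0) (h : GRel2 q u0 u1 u2 u3 p1 p0 z) (n : ℕ) :
    gy q u3 u2 p1 z (p1 * p0) (n + 2) = gy q u3 u2 p1 z (p1 * p0) (n + 1) * z
      - (q⁻¹) ^ 2 • (gy q u3 u2 p1 z (p1 * p0) n * (p1 * p0)) := by
  cases n with
  | zero => exact gy_rec1 hq h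
  | succ n => exact gy_rec q u3 u2 p1 z _ (gPz hq h) n

/-- `P y = q⁻⁶ y P`. -/
lemma gPy (hq : q ≠ 0) (h : GRel2 q u0 u1 u2 u3 p1 p0 z) (n : ℕ) :
    p1 * p0 * gy q u3 u2 p1 z (p1 * p0) n = (q⁻¹) ^ 6 • (gy q u3 u2 p1 z (p1 * p0) n * (p1 * p0)) := by
  have hP := gPz hq h
  have b3 : p1 * p0 * u3 = (q⁻¹) ^ 6 • (u3 * (p1 * p0)) := by
    rw [mul_assoc, h.h03, mul_smul_comm, ← mul_assoc, h.h13, smul_mul_assoc, smul_smul, mul_assoc]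
    congr 1; ring
  have b2 : p1 * p0 * (p1 * u2) = (q⁻¹) ^ 6 • (p1 * u2 * (p1 * p0)) := by
    calc p1 * p0 * (p1 * u2) = p1 * (p0 * p1) * u2 := by simp only [mul_assoc]
      _ = (q⁻¹) ^ 4 • (p1 * p1 * (p0 * u2)) := by
        rw [h.hpp, mul_smul_comm, smul_mul_assoc]; simp only [mul_assoc]
      _ = (q⁻¹) ^ 6 • (p1 * (p1 * u2) * p0) := by
        rw [h.h02, mul_smul_comm, smul_smul]; simp only [mul_assoc]
        congr 1; ring
      _ = _ := by rw [h.h12, ← mul_assoc p1 u2, h.h12]; simp only [mul_assoc]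
  have hT := fun n => (gT_comm q z _ hP n).2
  cases n with
  | zero => exact b3
  | succ n =>
    simp only [gy]
    rw [mul_sub, sub_mul, ← mul_assoc _ u3, b3, mul_smul_comm, ← mul_assoc _ (p1 * u2), b2]
    simp only [smul_mul_assoc, mul_assoc u3, mul_assoc (p1 * u2), hT, smul_sub, smul_smul]
    rw [mul_comm (q ^ 2)]

lemma gzy (hq : q ≠ 0) (h : GRel2 q u0 u1 u2 u3 p1 p0 z) (n : ℕ) :
    z * gy q u3 u2 p1 z (p1 * p0) (n + 1) = (q⁻¹) ^ 2 • gy q u3 u2 p1 z (p1 * p0) (n + 2)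
      + (q⁻¹) ^ 6 • (gy q u3 u2 p1 z (p1 * p0) n * (p1 * p0)) := by
  have hP := gPz hq h
  have e1 : gy q u3 u2 p1 z (p1 * p0) 1 = u3 * z - q ^ 2 • (p1 * u2) := by simp [gy, gT]
  have e0 : gy q u3 u2 p1 z (p1 * p0) 0 = u3 := rfl
  have b1 : z * gy q u3 u2 p1 z (p1 * p0) 1 = (q⁻¹) ^ 2 • gy q u3 u2 p1 z (p1 * p0) 2
      + (q⁻¹) ^ 6 • (gy q u3 u2 p1 z (p1 * p0) 0 * (p1 * p0)) := by
    rw [gy_rec1 hq h, e1, e0]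
    exact h.zy1
  induction n using Nat.twoStepInduction with
  | zero => exact b1
  | one =>
    have r3 := gy_rec' hq h 1
    have r2 := gy_rec' hq h 0
    simp only [zero_add, Nat.reduceAdd] at *
    rw [r3]
    nth_rewrite 1 [r2]
    have z0 : z * gy q u3 u2 p1 z (p1 * p0) 0 = (q⁻¹) ^ 2 • gy q u3 u2 p1 z (p1 * p0) 1 + (q⁻¹) ^ 2 • (p1 * u2) := by
      rw [e1, e0]; exact h.zu3
    have f1 : gy q u3 u2 p1 z (p1 * p0) 1 * (p1 * p0) = u3 * z * (p1 * p0) - q ^ 2 • (p1 * u2 * (p1 * p0)) := by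
      rw [e1, sub_mul, smul_mul_assoc]
    linear_combination (norm := skip) b1 * z - (q⁻¹)^2 • (z0 * (p1 * p0)) - (q⁻¹)^6 • f1
      + (q⁻¹)^6 • (e0 * z * (p1 * p0)) + (q⁻¹)^6 • (gy q u3 u2 p1 z (p1 * p0) 0 * hP)
    simp only [mul_add, add_mul, mul_sub, sub_mul, smul_mul_assoc, mul_smul_comm, smul_smul, smul_add, smul_sub, mul_assoc]
    match_scalars <;> field_simp <;> ring
  | more n ih1 ih2 =>
    have r3 := gy_rec' hq h (n + 2)
    have r2 := gy_rec' hq h (n + 1)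
    have r1 := gy_rec' hq h n
    rw [r3]
    nth_rewrite 1 [r2]
    linear_combination (norm := skip) ih2 * z - (q⁻¹)^2 • (ih1 * (p1 * p0)) - (q⁻¹)^6 • (r1 * (p1 * p0)) + (q⁻¹)^6 • (gy q u3 u2 p1 z (p1 * p0) (n+1) * hP)
    simp only [mul_add, add_mul, mul_sub, sub_mul, smul_mul_assoc, mul_smul_comm, smul_smul, smul_add, smul_sub, mul_assoc]
    match_scalars <;> field_simp <;> ring

lemma gyL (hq : q ≠ 0) (h : GRel2 q u0 u1 u2 u3 p1 p0 z) (n : ℕ) :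
    gy q u3 u2 p1 z (p1 * p0) (n + 1) = q ^ (2 * (n + 1)) • (gT q z (p1 * p0) (n + 1) * u3
      - (q⁻¹) ^ 2 • (gT q z (p1 * p0) n * (p1 * u2))) := by
  have e1 : gy q u3 u2 p1 z (p1 * p0) 1 = u3 * z - q ^ 2 • (p1 * u2) := by simp [gy, gT]
  have e0 : gy q u3 u2 p1 z (p1 * p0) 0 = u3 := rfl
  have b1 : gy q u3 u2 p1 z (p1 * p0) (0 + 1) = q ^ (2 * (0 + 1)) • (gT q z (p1 * p0) (0 + 1) * u3
      - (q⁻¹) ^ 2 • (gT q z (p1 * p0) 0 * (p1 * u2))) := by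
    simp only [zero_add, mul_one, gT, one_mul]
    rw [h.zu3, e1]
    match_scalars <;> field_simp <;> ring
  induction n using Nat.twoStepInduction with
  | zero => exact b1
  | one =>
    have z1 := gzy hq h 0
    have P0 := gPy hq h 0
    simp only [zero_add, Nat.reduceAdd, gT, one_mul] at *
    rw [e0] at *
    linear_combination (norm := skip) (-(q^2)) • z1 + q^2 • (z * b1) + q^2 • P0
    simp only [mul_one, mul_add, add_mul, mul_sub, sub_mul, smul_mul_assoc, mul_smul_comm, smul_smul, smul_add, smul_sub, mul_assoc]
    match_scalars <;> field_simp <;> ring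
  | more n ih1 ih2 =>
    have z1 := gzy hq h (n + 1)
    have P0 := gPy hq h (n + 1)
    have t1 : gT q z (p1 * p0) (n + 2 + 1) = z * gT q z (p1 * p0) (n + 2) - (q⁻¹) ^ 2 • (p1 * p0 * gT q z (p1 * p0) (n + 1)) := rfl
    have t2 : gT q z (p1 * p0) (n + 2) = z * gT q z (p1 * p0) (n + 1) - (q⁻¹) ^ 2 • (p1 * p0 * gT q z (p1 * p0) n) := rfl
    rw [t1]
    nth_rewrite 2 [t2]
    linear_combination (norm := skip) (-(q^2)) • z1 + q^2 • (z * ih2) + q^2 • P0 - q^2 • ((p1 * p0) * ih1)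
    simp only [mul_add, add_mul, mul_sub, sub_mul, smul_mul_assoc, mul_smul_comm, smul_smul, smul_add, smul_sub, mul_assoc]
    match_scalars <;> field_simp <;> ring

lemma gT_y (hq : q ≠ 0) (h : GRel2 q u0 u1 u2 u3 p1 p0 z) (n : ℕ) :
    q ^ (2 * (n + 1)) • gT q z (p1 * p0) (n + 2) = gy q u3 u2 p1 z (p1 * p0) (n + 1) * u0
      - q ^ 2 • (gy q u3 u2 p1 z (p1 * p0) n * (u1 * p0)) := by
  -- the key step
  have key : q ^ (2 * (n + 1)) • (gT q z (p1 * p0) (n + 1) * u2 - (q⁻¹) ^ 2 • (gT q z (p1 * p0) n * (p1 * u1)))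
      = gy q u3 u2 p1 z (p1 * p0) n * p0 := by
    cases n with
    | zero =>
      simp only [gT, gy, one_mul, zero_add]
      linear_combination (norm := skip) q ^ 2 • h.zu2 - h.h11
      match_scalars <;> field_simp <;> ring
    | succ n =>
      rw [gyL hq h n, gT_right q z _ (gPz hq h) n]
      linear_combination (norm := skip) q ^ (2 * (n + 2)) • (gT q z (p1 * p0) (n + 1) * h.zu2) - q ^ (2 * (n + 1)) • (gT q z (p1 * p0) (n + 1) * h.h11)
        - q ^ (2 * (n + 1)) • (gT q z (p1 * p0) n * p1 * h.h02)
      simp only [mul_add, add_mul, mul_sub, sub_mul, smul_mul_assoc, mul_smul_comm, smul_smul, smul_add, smul_sub, mul_assoc]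
      match_scalars <;> field_simp <;> ring
  rw [gyL hq h n, gT_right q z _ (gPz hq h) n]
  have c01 := h.h01
  have e30 := h.e30
  have e20 := h.e20
  linear_combination (norm := skip) (-(q ^ (2 * (n+1)))) • (gT q z (p1 * p0) (n + 1) * e30) + q ^ (2 * n) • (gT q z (p1 * p0) n * p1 * e20)
     - q ^ 2 • (key * u1) - q ^ 2 • (gy q u3 u2 p1 z (p1 * p0) n * c01)
  simp only [mul_add, add_mul, mul_sub, sub_mul, smul_mul_assoc, mul_smul_comm, smul_smul, smul_add, smul_sub, mul_assoc]
  match_scalars <;> field_simp <;> ring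
end
end gen2

section transfer

lemma qq_ne : qq ≠ 0 := RatFunc.X_ne_zero

lemma aeval_qq_ne (p : Polynomial ℚ) (hp : p ≠ 0) : Polynomial.aeval qq p ≠ 0 := by
  have : Polynomial.aeval qq p = algebraMap (Polynomial ℚ) F p := by
    have h : qq = algebraMap (Polynomial ℚ) F Polynomial.X := (RatFunc.algebraMap_X).symm
    rw [h, Polynomial.aeval_algebraMap_apply, Polynomial.aeval_X_left_apply]
  rw [this]
  simpa using hp

lemma qq_poly_ne (p : Polynomial ℚ) (x : ℚ) (hp : p.eval x ≠ 0) : Polynomial.aeval qq p ≠ 0 := by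
  apply aeval_qq_ne
  rintro rfl
  simp at hp

open Polynomial in
lemma qq_ne2 : qq ^ 2 + 1 + (qq⁻¹) ^ 2 ≠ 0 := by
  have h := qq_poly_ne (X ^ 4 + X ^ 2 + 1) 1 (by norm_num)
  simp only [map_add, map_pow, aeval_X, map_one] at h
  have hq := qq_ne
  intro h0
  apply h
  field_simp at h0
  linear_combination h0

open Polynomial in
lemma qq_ne3 : qq ^ 2 + (qq⁻¹) ^ 2 ≠ 0 := by
  have h := qq_poly_ne (X ^ 4 + 1) 1 (by norm_num)
  simp only [map_add, map_pow, aeval_X, map_one] at h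
  have hq := qq_ne
  intro h0
  apply h
  field_simp at h0
  linear_combination h0

open Polynomial in
lemma qq_ne4 : qq + qq⁻¹ ≠ 0 := by
  have h := qq_poly_ne (X ^ 2 + 1) 1 (by norm_num)
  simp only [map_add, map_pow, aeval_X, map_one] at h
  have hq := qq_ne
  intro h0
  apply h
  field_simp at h0
  linear_combination h0

open Polynomial in
lemma qq_pow_ne_one (m : ℕ) (hm : m ≠ 0) : qq ^ m - 1 ≠ 0 := by
  have h := qq_poly_ne (X ^ m - 1) 2 (by
    simp only [eval_sub, eval_pow, eval_X, eval_one]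
    have : (1:ℚ) < 2 ^ m := one_lt_pow₀ (by norm_num) hm
    linarith)
  simpa using h

lemma qq_ne5 : 1 - (qq⁻¹) ^ 2 ≠ 0 := by
  have h := qq_pow_ne_one 2 (by norm_num)
  have hq := qq_ne
  intro h0
  apply h
  field_simp at h0
  linear_combination h0

lemma two_ne : (2 : F) ≠ 0 := two_ne_zero

lemma serre1 : E1 ^ 3 * E2 - box3 • (E1 ^ 2 * E2 * E1) + box3 • (E1 * E2 * E1 ^ 2) - E2 * E1 ^ 3 = 0 := by
  have h := RingQuot.mkAlgHom_rel F SerreRel.rel1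
  simpa [E1, E2] using h

lemma serre2 : E2 ^ 3 * E1 - box3 • (E2 ^ 2 * E1 * E2) + box3 • (E2 * E1 * E2 ^ 2) - E1 * E2 ^ 3 = 0 := by
  have h := RingQuot.mkAlgHom_rel F SerreRel.rel2
  simpa [E1, E2] using h

lemma gScale {K : Type*} [Field K] {R : Type*} [Ring R] [Algebra K R] (q : K) (hq : q ≠ 0) (c : K) (e x1 x2 x3 : R)
    (g1 : x1 * e = q ^ 2 • (e * x1)) (g2 : x2 * x1 = q ^ 2 • (x1 * x2)) (g3 : x3 * x2 = q ^ 2 • (x2 * x3))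
    (g4 : x2 * e = q ^ 2 • (e * x2) + (q ^ 2 - 1) • (x1 * x1))
    (g5 : x3 * x1 = q ^ 2 • (x1 * x3) + (q ^ 2 - 1) • (x2 * x2))
    (g6 : x3 * e = q ^ 2 • (e * x3) + (q ^ 2 - (q⁻¹) ^ 2) • (x2 * x1)) :
    GRel q e (c • x1) (c ^ 2 • x2) (c ^ 3 • x3) := by
  constructor
  · exact hq
  · linear_combination (norm := skip) (-((q⁻¹) ^ 2 * c)) • g1
    simp only [smul_mul_assoc, mul_smul_comm, smul_smul, smul_add]
    match_scalars <;> field_simp <;> ring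
  · linear_combination (norm := skip) (-((q⁻¹) ^ 2 * c^3)) • g2
    simp only [smul_mul_assoc, mul_smul_comm, smul_smul, smul_add]
    match_scalars <;> field_simp <;> ring
  · linear_combination (norm := skip) (-((q⁻¹) ^ 2 * c^5)) • g3
    simp only [smul_mul_assoc, mul_smul_comm, smul_smul, smul_add]
    match_scalars <;> field_simp <;> ring
  · linear_combination (norm := skip) (-((q⁻¹) ^ 2 * c^2)) • g4
    simp only [smul_mul_assoc, mul_smul_comm, smul_smul, smul_add]
    match_scalars <;> field_simp <;> ring
  · linear_combination (norm := skip) (-((q⁻¹) ^ 2 * c^4)) • g5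
    simp only [smul_mul_assoc, mul_smul_comm, smul_smul, smul_add]
    match_scalars <;> field_simp <;> ring
  · linear_combination (norm := skip) (-((q⁻¹) ^ 2 * c^3)) • g6
    simp only [smul_mul_assoc, mul_smul_comm, smul_smul, smul_add]
    match_scalars <;> field_simp <;> ring

lemma relU : GRel qq u0 u1 u2 u3 := by
  have hq := qq_ne
  have h4 := qq_ne4
  have h5 := qq_ne5
  obtain ⟨a, ha⟩ : ∃ a, a = E2 * E1 - (qq⁻¹) ^ 2 • (E1 * E2) := ⟨_, rfl⟩
  obtain ⟨x1, hx1⟩ : ∃ x, a * E1 - E1 * a = x := ⟨_, rfl⟩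
  obtain ⟨x2, hx2⟩ : ∃ x, a * x1 - x1 * a = x := ⟨_, rfl⟩
  obtain ⟨x3, hx3⟩ : ∃ x, a * x2 - x2 * a = x := ⟨_, rfl⟩
  obtain ⟨g1, g2, g3, g4, g5, g6⟩ := gSerre qq hq qq_ne2 two_ne qq_ne3 E1 E2 serre1 serre2 a x1 x2 x3 ha hx1 hx2 hx3
  obtain ⟨d, hd⟩ : ∃ d : F, d = (qq + qq⁻¹)⁻¹ := ⟨_, rfl⟩
  obtain ⟨c, hc⟩ : ∃ c : F, c = ((1 - (qq⁻¹) ^ 2)⁻¹) ^ 2 * d := ⟨_, rfl⟩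
  have e0 : Aelt = d • a := by rw [Aelt, ← hd, ha]
  have f1 : v1 = d • x1 := by
    rw [v1, v0, e0, ← hx1]; simp only [smul_mul_assoc, mul_smul_comm, smul_sub]
  have f2 : v2 = d ^ 2 • x2 := by
    rw [v2, f1, e0, ← hx2]; simp only [smul_mul_assoc, mul_smul_comm, smul_sub, smul_smul, pow_two]
  have f3 : v3 = d ^ 3 • x3 := by
    rw [v3, f2, e0, ← hx3]; simp only [smul_mul_assoc, mul_smul_comm, smul_sub, smul_smul, ← pow_succ', ← pow_succ, Nat.reduceAdd]
  have k0 : u0 = E1 := rfl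
  have k1 : u1 = c • x1 := by rw [u1, f1, smul_smul, hc]
  have k2 : u2 = c ^ 2 • x2 := by rw [u2, f2, smul_smul, hc]; congr 1; ring
  have k3 : u3 = c ^ 3 • x3 := by rw [u3, f3, smul_smul, hc]; congr 1; ring
  rw [k0, k1, k2, k3]
  exact gScale qq hq c E1 x1 x2 x3 g1 g2 g3 g4 g5 g6

lemma relS : GRel qq us0 us1 us2 us3 := by
  have h := relU
  constructor
  · exact h.hq
  · exact Subtype.ext h.r01
  · exact Subtype.ext h.r12
  · exact Subtype.ext h.r23
  · exact Subtype.ext h.r02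
  · exact Subtype.ext h.r13
  · exact Subtype.ext h.r03

/-- The element `z`. -/
def zs : Sgen := us3 * us0 - qq ^ 2 • (us2 * us1)

lemma relS2 : GRel2 qq us0 us1 us2 us3 ps1 ps0 zs := gRel2 relS

end transfer

section gen4
variable {K : Type*} [Field K] {R : Type*} [Ring R] [Algebra K R]

lemma qpi {q : K} (hq : q ≠ 0) {a b c : ℕ} (h : b = a + c) : q ^ a * (q⁻¹) ^ b = (q⁻¹) ^ c := by
  rw [h, pow_add, ← mul_assoc, ← mul_pow, mul_inv_cancel₀ hq, one_pow, one_mul]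

lemma qc_left {t : K} {x y : R} (h : x * y = t • (y * x)) (n : ℕ) : x ^ n * y = t ^ n • (y * x ^ n) := by
  induction n with
  | zero => simp
  | succ n ih =>
    rw [pow_succ', mul_assoc, ih, mul_smul_comm, ← mul_assoc, h, smul_mul_assoc, smul_smul, mul_assoc, ← pow_succ]

lemma qc_right {t : K} {x y : R} (h : x * y = t • (y * x)) (n : ℕ) : x * y ^ n = t ^ n • (y ^ n * x) := by
  induction n with
  | zero => simp
  | succ n ih =>
    rw [pow_succ, ← mul_assoc, ih, smul_mul_assoc, mul_assoc, h, mul_smul_comm, smul_smul, ← mul_assoc, ← pow_succ]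

variable {q : K} {u0 u1 u2 u3 p1 p0 z : R}

lemma gStepA (hr : GRel q u0 u1 u2 u3) (h : GRel2 q u0 u1 u2 u3 p1 p0 z) (a b c d : ℕ) :
    u2 * (p1 ^ a * u2 ^ b * u1 ^ c * p0 ^ d) * (u0 * p1) =
      (q⁻¹) ^ (2 * d + 4) • (p1 ^ (a + 1) * u2 ^ b * u1 ^ c * p0 ^ (d + 1))
      + (q⁻¹) ^ (2 * d + 2) • (p1 ^ (a + 1) * u2 ^ b * u1 ^ (c + 2) * p0 ^ d) := by
  have hq := hr.hq
  have r10 : u1 * u0 = q ^ 2 • (u0 * u1) := by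
    rw [hr.r01, smul_smul, ← mul_pow, mul_inv_cancel₀ hq, one_pow, one_smul]
  have r1p : u1 * p1 = (q⁻¹) ^ 2 • (p1 * u1) := by
    rw [h.h11, smul_smul, ← mul_pow, inv_mul_cancel₀ hq, one_pow, one_smul]
  have c1 : Commute u2 p1 := h.h12.symm
  have e1 : u2 * (p1 ^ a * u2 ^ b * u1 ^ c * p0 ^ d) * (u0 * p1)
      = p1 ^ a * u2 ^ b * (u2 * (u1 ^ c * (p0 ^ d * u0) * p1)) := by
    have : u2 * (p1 ^ a * u2 ^ b) = p1 ^ a * u2 ^ b * u2 := by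
      rw [← mul_assoc, (c1.pow_right a).eq, mul_assoc, mul_assoc, ← pow_succ', ← pow_succ]
    calc _ = (u2 * (p1 ^ a * u2 ^ b)) * (u1 ^ c * (p0 ^ d * u0) * p1) := by simp only [mul_assoc]
      _ = _ := by rw [this]; simp only [mul_assoc]
  have e2 : u2 * (u1 ^ c * (p0 ^ d * u0) * p1) = (q ^ (2 * c + 2 * d)) • ((p0 + q ^ 2 • (u1 * u1)) * u1 ^ c * p0 ^ d * p1) := by
    rw [qc_left h.h00, mul_smul_comm, ← mul_assoc (u1 ^ c), qc_left r10, ← h.e20]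
    simp only [smul_mul_assoc, mul_smul_comm, smul_smul, mul_assoc]
    congr 1; ring
  have e3 : p0 ^ d * p1 = (q⁻¹) ^ (4 * d) • (p1 * p0 ^ d) := by
    rw [qc_left h.hpp]; congr 1; ring
  have e4 : u1 ^ c * p1 = (q⁻¹) ^ (2 * c) • (p1 * u1 ^ c) := by
    rw [qc_left r1p]; congr 1; ring
  have e5 : (p0 + q ^ 2 • (u1 * u1)) * u1 ^ c * p0 ^ d * p1 =
      (q⁻¹) ^ (4 * d + 2 * c + 4) • (p1 * (u1 ^ c * p0 ^ (d + 1)))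
      + (q ^ 2 * (q⁻¹) ^ (4 * d + 2 * c + 4)) • (p1 * (u1 ^ (c + 2) * p0 ^ d)) := by
    have f1 : p0 * u1 ^ c = u1 ^ c * p0 := ((show Commute p0 u1 from h.h01).pow_right c).eq
    have f2 : (p0 + q ^ 2 • (u1 * u1)) * u1 ^ c * p0 ^ d * p1
        = p0 * (u1 ^ c * (p0 ^ d * p1)) + q ^ 2 • (u1 * (u1 * (u1 ^ c * (p0 ^ d * p1)))) := by
      simp only [add_mul, smul_mul_assoc, mul_assoc]
    rw [f2, e3, mul_smul_comm, ← mul_assoc (u1 ^ c), e4]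
    have f3 : p0 * (p1 * u1 ^ c * p0 ^ d) = (q⁻¹) ^ 4 • (p1 * (u1 ^ c * p0 ^ (d + 1))) := by
      rw [mul_assoc p1, ← mul_assoc p0, h.hpp, pow_succ' p0, ← mul_assoc (u1 ^ c), ← f1, smul_mul_assoc]
      simp only [mul_assoc]
    have f4 : u1 * (u1 * (p1 * u1 ^ c * p0 ^ d)) = (q⁻¹) ^ 4 • (p1 * (u1 ^ (c + 2) * p0 ^ d)) := by
      rw [mul_assoc p1, ← mul_assoc u1 p1, r1p, smul_mul_assoc, mul_smul_comm, mul_assoc, ← mul_assoc u1 p1, r1p,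
        smul_mul_assoc, smul_smul, pow_succ' u1, pow_succ' u1]
      simp only [mul_assoc]
      congr 1; ring
    simp only [smul_mul_assoc, mul_smul_comm, f3, f4, smul_smul]
    congr 2 <;> ring
  have e6 : ∀ w, p1 ^ a * u2 ^ b * (p1 * w) = p1 ^ (a + 1) * u2 ^ b * w := by
    intro w
    rw [← mul_assoc, mul_assoc (p1 ^ a), (c1.pow_left b).eq, ← mul_assoc, ← pow_succ]
  rw [e1, e2, e5]
  simp only [smul_add, mul_add, mul_smul_comm, e6, smul_smul, ← mul_assoc]
  congr 2
  · exact qpi hq (by ring)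
  · rw [← pow_add]; exact qpi hq (by ring)

lemma gStepB (hr : GRel q u0 u1 u2 u3) (h : GRel2 q u0 u1 u2 u3 p1 p0 z) (a b c d : ℕ) :
    u2 * (p1 ^ a * u2 ^ b * u1 ^ c * p0 ^ d) * (u2 * p0) =
      (q⁻¹) ^ (2 * d + 2 * c) • (p1 ^ a * u2 ^ (b + 2) * u1 ^ c * p0 ^ (d + 1)) := by
  have hq := hr.hq
  have c1 : Commute u2 p1 := h.h12.symm
  have e1 : u2 * (p1 ^ a * u2 ^ b * u1 ^ c * p0 ^ d) * (u2 * p0)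
      = p1 ^ a * u2 ^ b * (u2 * (u1 ^ c * (p0 ^ d * u2) * p0)) := by
    have : u2 * (p1 ^ a * u2 ^ b) = p1 ^ a * u2 ^ b * u2 := by
      rw [← mul_assoc, (c1.pow_right a).eq, mul_assoc, mul_assoc, ← pow_succ', ← pow_succ]
    calc _ = (u2 * (p1 ^ a * u2 ^ b)) * (u1 ^ c * (p0 ^ d * u2) * p0) := by simp only [mul_assoc]
      _ = _ := by rw [this]; simp only [mul_assoc]
  rw [e1, qc_left h.h02, mul_smul_comm, ← mul_assoc (u1 ^ c), qc_left hr.r12]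
  simp only [smul_mul_assoc, mul_smul_comm, smul_smul, pow_succ u2, pow_succ p0, mul_assoc]
  congr 1; ring

lemma gStepC (hr : GRel q u0 u1 u2 u3) (h : GRel2 q u0 u1 u2 u3 p1 p0 z) (a b c d : ℕ) :
    u2 ^ 2 * (p1 ^ a * u2 ^ b * u1 ^ c * p0 ^ d) * (u1 ^ 2 * (p1 * p0)) =
      (q⁻¹) ^ (4 * d + 2 * c + 4) • (p1 ^ (a + 1) * u2 ^ (b + 2) * u1 ^ (c + 2) * p0 ^ (d + 1)) := by
  have hq := hr.hq
  have c1 : Commute u2 p1 := h.h12.symm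
  have r1p : u1 * p1 = (q⁻¹) ^ 2 • (p1 * u1) := by
    rw [h.h11, smul_smul, ← mul_pow, inv_mul_cancel₀ hq, one_pow, one_smul]
  have f1 : p0 ^ d * u1 ^ 2 = u1 ^ 2 * p0 ^ d := ((show Commute p0 u1 from h.h01).pow_pow d 2).eq
  have e1 : u2 ^ 2 * (p1 ^ a * u2 ^ b * u1 ^ c * p0 ^ d) * (u1 ^ 2 * (p1 * p0))
      = p1 ^ a * u2 ^ (b + 2) * (u1 ^ (c + 2) * (p0 ^ d * p1) * p0) := by
    have : u2 ^ 2 * (p1 ^ a * u2 ^ b) = p1 ^ a * u2 ^ (b + 2) := by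
      rw [← mul_assoc, (c1.pow_pow 2 a).eq, mul_assoc, ← pow_add, add_comm]
    calc _ = (u2 ^ 2 * (p1 ^ a * u2 ^ b)) * (u1 ^ c * (p0 ^ d * u1 ^ 2) * p1 * p0) := by simp only [mul_assoc]
      _ = _ := by rw [this, f1, ← mul_assoc (u1 ^ c), ← pow_add]; simp only [mul_assoc]
  rw [e1, qc_left h.hpp, mul_smul_comm, ← mul_assoc (u1 ^ (c + 2)), qc_left r1p]
  have e6 : ∀ w, p1 ^ a * (u2 ^ (b + 2) * (p1 * w)) = p1 ^ (a + 1) * (u2 ^ (b + 2) * w) := by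
    intro w
    rw [← mul_assoc (u2 ^ _), (c1.pow_left _).eq, pow_succ p1, mul_assoc, mul_assoc]
  simp only [smul_mul_assoc, mul_smul_comm, smul_smul, pow_succ p0, mul_assoc, e6]
  congr 1; ring

/-- shift helper -/
def sh (f : ℕ → K) : ℕ → K
  | 0 => 0
  | n + 1 => f n

/-- monomials -/
def gm (u1 u2 p1 p0 : R) (n k l : ℕ) : R := p1 ^ (n - k) * u2 ^ (2 * k) * u1 ^ (2 * l) * p0 ^ (n - l)

lemma sum_sh (f : ℕ → K) (g : ℕ → R) (N : ℕ) :
    ∑ k ∈ Finset.range N, f k • g (k + 1) = ∑ k ∈ Finset.range (N + 1), sh f k • g k := by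
  rw [Finset.sum_range_succ']; simp [sh]

lemma gm_A (hr : GRel q u0 u1 u2 u3) (h : GRel2 q u0 u1 u2 u3 p1 p0 z) (n k l : ℕ) (hk : k ≤ n) (hl : l ≤ n) :
    u2 * gm u1 u2 p1 p0 n k l * (q ^ 2 • (u0 * p1) + q ^ (2 * n) • (u2 * p0)) =
      (q⁻¹) ^ (2 * (n - l) + 2) • gm u1 u2 p1 p0 (n + 1) k l + (q⁻¹) ^ (2 * (n - l)) • gm u1 u2 p1 p0 (n + 1) k (l + 1)
      + (q⁻¹) ^ (2 * l) • gm u1 u2 p1 p0 (n + 1) (k + 1) l := by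
  have hq := hr.hq
  unfold gm
  rw [mul_add, mul_smul_comm, mul_smul_comm, gStepA hr h, gStepB hr h, smul_add]
  simp only [smul_smul]
  obtain ⟨i, rfl⟩ := Nat.exists_eq_add_of_le hk
  obtain ⟨j, hj⟩ := Nat.exists_eq_add_of_le hl
  have x1 : k + i - k = i := by omega
  have x2 : k + i - l = j := by omega
  have x3 : k + i + 1 - k = i + 1 := by omega
  have x4 : k + i + 1 - l = j + 1 := by omega
  have x5 : k + i + 1 - (l + 1) = j := by omega
  have x6 : k + i + 1 - (k + 1) = i := by omega
  rw [x1, x2, x3, x4, x5, x6]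
  have y1 : q ^ 2 * q⁻¹ ^ (2 * j + 4) = q⁻¹ ^ (2 * j + 2) := qpi hq (by ring)
  have y2 : q ^ 2 * q⁻¹ ^ (2 * j + 2) = q⁻¹ ^ (2 * j) := qpi hq (by ring)
  have y3 : q ^ (2 * (k + i)) * q⁻¹ ^ (2 * j + 2 * (2 * l)) = q⁻¹ ^ (2 * l) := by rw [hj]; exact qpi hq (by ring)
  rw [y1, y2, y3]
  rfl

lemma gm_C (hr : GRel q u0 u1 u2 u3) (h : GRel2 q u0 u1 u2 u3 p1 p0 z) (n k l : ℕ) (hk : k ≤ n) (hl : l ≤ n) :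
    u2 ^ 2 * gm u1 u2 p1 p0 n k l * (u1 ^ 2 * (p1 * p0)) =
      (q⁻¹) ^ (4 * (n + 1)) • gm u1 u2 p1 p0 (n + 2) (k + 1) (l + 1) := by
  unfold gm
  rw [gStepC hr h]
  have x3 : n + 2 - (k + 1) = n - k + 1 := by omega
  have x4 : n + 2 - (l + 1) = n - l + 1 := by omega
  rw [x3, x4]
  have x5 : 4 * (n - l) + 2 * (2 * l) + 4 = 4 * (n + 1) := by omega
  rw [x5]
  rfl

lemma gX_step (hr : GRel q u0 u1 u2 u3) (h : GRel2 q u0 u1 u2 u3 p1 p0 z) (n : ℕ) (T : R) :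
    u2 ^ (n + 1) * (T * z) * u1 ^ (n + 1) = u2 * (u2 ^ n * T * u1 ^ n) * (q ^ 2 • (u0 * p1) + q ^ (2 * n) • (u2 * p0)) := by
  have hq := hr.hq
  have e1 : z * u1 ^ (n + 1) = u1 ^ n * (q ^ 2 • (u0 * p1) + q ^ (2 * n) • (u2 * p0)) := by
    have r21 : u2 * u1 = q ^ 2 • (u1 * u2) := by
      rw [hr.r12, smul_smul, ← mul_pow, mul_inv_cancel₀ hq, one_pow, one_smul]
    have f1 : p0 * u1 ^ n = u1 ^ n * p0 := ((show Commute p0 u1 from h.h01).pow_right n).eq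
    rw [pow_succ', ← mul_assoc, h.zu1, add_mul, smul_mul_assoc, mul_assoc, mul_assoc, f1, qc_right h.h11, ← mul_assoc u2,
      qc_right r21, mul_smul_comm, ← mul_assoc u0, qc_right hr.r01]
    simp only [smul_mul_assoc, mul_smul_comm, smul_smul, mul_assoc, mul_add]
    congr 2
    · rw [← pow_mul, ← pow_mul, qpi hq (c := 0) (by ring), pow_zero, mul_one]
    · ring
  rw [mul_assoc, mul_assoc T, e1, pow_succ']
  simp only [mul_assoc]

lemma gX_stepP (hr : GRel q u0 u1 u2 u3) (h : GRel2 q u0 u1 u2 u3 p1 p0 z) (n : ℕ) (T : R) :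
    u2 ^ (n + 2) * (T * (p1 * p0)) * u1 ^ (n + 2) = q ^ (2 * (n + 2)) • (u2 ^ 2 * (u2 ^ n * T * u1 ^ n) * (u1 ^ 2 * (p1 * p0))) := by
  have f1 : p0 * u1 ^ (n + 2) = u1 ^ (n + 2) * p0 := ((show Commute p0 u1 from h.h01).pow_right _).eq
  have e1 : p1 * p0 * u1 ^ (n + 2) = q ^ (2 * (n + 2)) • (u1 ^ (n + 2) * (p1 * p0)) := by
    rw [mul_assoc, f1, ← mul_assoc, qc_right h.h11, smul_mul_assoc, mul_assoc]
    congr 1; ring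
  rw [mul_assoc, mul_assoc T, e1, pow_add u1, add_comm n 2, pow_add u2]
  simp only [mul_smul_comm, mul_assoc]

/-- The expansion -/
lemma gX (hr : GRel q u0 u1 u2 u3) (h : GRel2 q u0 u1 u2 u3 p1 p0 z) (c : ℕ → ℕ → ℕ → K)
    (c00 : c 0 0 0 = 1) (cz : ∀ n k l, n < k + l → c n k l = 0)
    (c1 : ∀ k l, c 1 k l = (q⁻¹) ^ (2 * (0 - l) + 2) * c 0 k l + sh (fun l => (q⁻¹) ^ (2 * (0 - l)) * c 0 k l) l
       + (q⁻¹) ^ (2 * l) * sh (fun k => c 0 k l) k)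
    (crec : ∀ n k l, c (n + 2) k l = (q⁻¹) ^ (2 * (n + 1 - l) + 2) * c (n + 1) k l
       + sh (fun l => (q⁻¹) ^ (2 * (n + 1 - l)) * c (n + 1) k l) l
       + (q⁻¹) ^ (2 * l) * sh (fun k => c (n + 1) k l) k - (q⁻¹) ^ (2 * (n + 1)) * sh (fun l => sh (fun k => c n k l) k) l)
    (n : ℕ) :
    u2 ^ n * gT q z (p1 * p0) n * u1 ^ n = ∑ k ∈ Finset.range (n + 1), ∑ l ∈ Finset.range (n + 1), c n k l • gm u1 u2 p1 p0 n k l := by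
  have hq := hr.hq
  have main : ∀ n, u2 ^ n * gT q z (p1 * p0) n * u1 ^ n = ∑ k ∈ Finset.range (n + 1), ∑ l ∈ Finset.range (n + 1), c n k l • gm u1 u2 p1 p0 n k l →
     u2 ^ (n + 1) * (gT q z (p1 * p0) n * z) * u1 ^ (n + 1) = ∑ k ∈ Finset.range (n + 2), ∑ l ∈ Finset.range (n + 2),
      ((q⁻¹) ^ (2 * (n - l) + 2) * c n k l + sh (fun l => (q⁻¹) ^ (2 * (n - l)) * c n k l) l
       + (q⁻¹) ^ (2 * l) * sh (fun k => c n k l) k) • gm u1 u2 p1 p0 (n + 1) k l := by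
    intro n hn
    rw [gX_step hr h, hn]
    simp only [Finset.mul_sum, Finset.sum_mul, add_smul, Finset.sum_add_distrib]
    have a0 : ∀ k ∈ Finset.range (n + 1), ∀ l ∈ Finset.range (n + 1),
      u2 * c n k l • gm u1 u2 p1 p0 n k l * (q ^ 2 • (u0 * p1) + q ^ (2 * n) • (u2 * p0)) =
      ((q⁻¹) ^ (2 * (n - l) + 2) * c n k l) • gm u1 u2 p1 p0 (n + 1) k l + ((q⁻¹) ^ (2 * (n - l)) * c n k l) • gm u1 u2 p1 p0 (n + 1) k (l + 1)
      + ((q⁻¹) ^ (2 * l) * c n k l) • gm u1 u2 p1 p0 (n + 1) (k + 1) l := by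
      intro k hk l hl
      rw [Finset.mem_range] at hk hl
      rw [mul_smul_comm, smul_mul_assoc, gm_A hr h n k l (by omega) (by omega)]
      simp only [smul_add, smul_smul, mul_comm (c n k l)]
    rw [Finset.sum_congr rfl (fun k hk => Finset.sum_congr rfl (a0 k hk))]
    simp only [Finset.sum_add_distrib]
    have z1 : ∀ k, c n k (n + 1) = 0 := fun k => cz _ _ _ (by omega)
    have z2 : ∀ l, c n (n + 1) l = 0 := fun k => cz _ _ _ (by omega)
    congr 1
    · congr 1
      · rw [Finset.sum_range_succ _ (n + 1)]
        simp [z2, Finset.sum_range_succ _ (n + 1), z1]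
      · rw [Finset.sum_range_succ _ (n + 1)]
        have : ∑ l ∈ Finset.range (n + 2), sh (fun l => q⁻¹ ^ (2 * (n - l)) * c n (n + 1) l) l • gm u1 u2 p1 p0 (n + 1) (n + 1) l = 0 := by
          rw [← sum_sh]; simp [z2]
        rw [this, add_zero]
        refine Finset.sum_congr rfl fun k _ => ?_
        rw [← sum_sh]
    · rw [Finset.sum_comm, Finset.sum_comm (s := Finset.range (n + 2))]
      rw [Finset.sum_range_succ _ (n + 1)]
      have : ∑ k ∈ Finset.range (n + 2), (q⁻¹ ^ (2 * (n + 1)) * sh (fun k => c n k (n + 1)) k) • gm u1 u2 p1 p0 (n + 1) k (n + 1) = 0 := by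
        simp only [mul_smul, ← Finset.smul_sum]
        rw [← sum_sh]; simp [z1]
      rw [this, add_zero]
      refine Finset.sum_congr rfl fun k _ => ?_
      simp only [mul_smul, ← Finset.smul_sum]
      rw [← sum_sh]
  have mainP : ∀ n, u2 ^ n * gT q z (p1 * p0) n * u1 ^ n = ∑ k ∈ Finset.range (n + 1), ∑ l ∈ Finset.range (n + 1), c n k l • gm u1 u2 p1 p0 n k l →
     u2 ^ (n + 2) * (gT q z (p1 * p0) n * (p1 * p0)) * u1 ^ (n + 2) = ∑ k ∈ Finset.range (n + 3), ∑ l ∈ Finset.range (n + 3),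
      (q ^ (2 * (n + 2)) * (q⁻¹) ^ (4 * (n + 1)) * sh (fun l => sh (fun k => c n k l) k) l) • gm u1 u2 p1 p0 (n + 2) k l := by
    intro n hn
    rw [gX_stepP hr h, hn]
    simp only [Finset.mul_sum, Finset.sum_mul, mul_smul, ← Finset.smul_sum]
    have a0 : ∀ k ∈ Finset.range (n + 1), ∀ l ∈ Finset.range (n + 1),
      u2 ^ 2 * c n k l • gm u1 u2 p1 p0 n k l * (u1 ^ 2 * (p1 * p0)) =
      (q⁻¹) ^ (4 * (n + 1)) • c n k l • gm u1 u2 p1 p0 (n + 2) (k + 1) (l + 1) := by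
      intro k hk l hl
      rw [Finset.mem_range] at hk hl
      rw [mul_smul_comm, smul_mul_assoc, gm_C hr h n k l (by omega) (by omega), smul_comm]
    rw [Finset.sum_congr rfl (fun k hk => Finset.sum_congr rfl (a0 k hk))]
    simp only [← Finset.smul_sum]
    congr 2
    have z1 : ∀ k, c n k (n + 1) = 0 := fun k => cz _ _ _ (by omega)
    have z2 : ∀ l, c n (n + 1) l = 0 := fun k => cz _ _ _ (by omega)
    have trim : ∀ f : ℕ → R, f 0 = 0 → f (n + 2) = 0 → ∑ k ∈ Finset.range (n + 3), f k = ∑ k ∈ Finset.range (n + 1), f (k + 1) := by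
      intro f f0 f1
      rw [Finset.sum_range_succ', f0, Finset.sum_range_succ, f1, add_zero, add_zero]
    rw [trim]
    · refine Finset.sum_congr rfl fun k _ => ?_
      rw [trim]
      · rfl
      · simp [sh]
      · simp [sh, z1]
    · refine Finset.sum_eq_zero fun l _ => ?_
      cases l <;> simp [sh]
    · refine Finset.sum_eq_zero fun l _ => ?_
      cases l <;> simp [sh, z2]
  induction n using Nat.twoStepInduction with
  | zero => simp [gT, gm, c00]
  | one =>
    have := main 0 (by simp [gT, gm, c00])
    simp only [c1]
    simpa [gT] using this
  | more n ih1 ih2 =>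
    rw [gT_right q z _ (gPz hq h) n, mul_sub, sub_mul, main _ ih2, mul_smul_comm, smul_mul_assoc, mainP _ ih1]
    simp only [Finset.smul_sum, ← Finset.sum_sub_distrib, smul_smul, ← sub_smul]
    refine Finset.sum_congr rfl fun k _ => Finset.sum_congr rfl fun l _ => ?_
    rw [crec]
    congr 2
    rw [← mul_assoc, ← mul_assoc]
    congr 1
    rw [mul_comm (q⁻¹ ^ 2), mul_assoc, ← pow_add]
    exact qpi hq (by ring)
end gen4

section coef

lemma qint_zero : qint 0 = 0 := by simp [qint]

lemma qq_zpow_ne (m : ℤ) : qq ^ m ≠ 0 := zpow_ne_zero _ qq_ne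

lemma qq_sub_ne : qq - qq⁻¹ ≠ 0 := by
  have h := qq_pow_ne_one 2 (by norm_num)
  have hq := qq_ne
  intro h0
  apply h
  field_simp at h0
  linear_combination h0

lemma qint_ne (m : ℕ) : qint ((m : ℤ) + 1) ≠ 0 := by
  unfold qint
  apply div_ne_zero _ qq_sub_ne
  have h := qq_pow_ne_one (2 * (m + 1)) (by omega)
  intro h0
  apply h
  have e : qq ^ ((m : ℤ) + 1) * qq ^ (-((m : ℤ) + 1)) = 1 := by
    rw [← zpow_add₀ qq_ne]; simp
  have e2 : qq ^ ((m : ℤ) + 1) = qq ^ (m + 1) := by exact_mod_cast zpow_natCast qq (m + 1)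
  rw [e2] at h0 e
  rw [pow_mul']
  linear_combination qq ^ (m + 1) * h0 + e

lemma qint_ne' (m : ℕ) (hm : m ≠ 0) : qint (m : ℤ) ≠ 0 := by
  obtain ⟨k, rfl⟩ := Nat.exists_eq_succ_of_ne_zero hm
  have := qint_ne k
  push_cast
  exact this

lemma qint_one : qint 1 = 1 := by
  unfold qint
  rw [zpow_one, zpow_neg_one]
  exact div_self qq_sub_ne

lemma qfact_succ (i : ℕ) : qfact (i + 1) = qfact i * qint ((i : ℤ) + 1) := by
  unfold qfact; rw [Finset.prod_range_succ]

lemma qfact_zero : qfact 0 = 1 := by simp [qfact]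

lemma qfact_ne (i : ℕ) : qfact i ≠ 0 := by
  unfold qfact
  exact Finset.prod_ne_zero_iff.mpr fun j _ => qint_ne j

lemma qbinom_eq (a l : ℕ) : qbinom ((a : ℤ) + l) l = qfact (a + l) / (qfact a * qfact l) := by
  have h : ∀ l : ℕ, qfact a * ∏ j ∈ Finset.range l, qint ((a : ℤ) + l - j) = qfact (a + l) := by
    intro l
    induction l with
    | zero => simp
    | succ l ih =>
      rw [Finset.prod_range_succ', ← mul_assoc, ← add_assoc, qfact_succ, ← ih]
      push_cast
      congr 2
      · refine Finset.prod_congr rfl fun j _ => ?_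
        congr 1; ring
  unfold qbinom
  rw [← h l]
  have := qfact_ne a
  have := qfact_ne l
  field_simp

/-- coefficients -/
def cf (n k l : ℕ) : F :=
  if k + l ≤ n then
    qq ^ (gexp n k l - 2 * (n : ℤ) * ((n : ℤ) - 1)) * qbinom ((n : ℤ) - k) l * qbinom ((n : ℤ) - l) k
  else 0

/-- coefficients, in other coordinates -/
def cD (j k l : ℕ) : F :=
  qq ^ (-((j : ℤ) + k + l + 1) * j - 2 * k * l) * qfact (j + l) * qfact (j + k) / (qfact j ^ 2 * qfact k * qfact l)

lemma cfD (n j k l : ℕ) (h : n = j + k + l) : cf n k l = cD j k l := by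
  subst h
  unfold cf cD
  rw [if_pos (by omega)]
  have e1 : ((j + k + l : ℕ) : ℤ) - k = (j : ℤ) + l := by push_cast; ring
  have e2 : ((j + k + l : ℕ) : ℤ) - l = (j : ℤ) + k := by push_cast; ring
  rw [e1, e2, qbinom_eq, qbinom_eq]
  have e3 : gexp (j + k + l) k l - 2 * ((j + k + l : ℕ) : ℤ) * (((j + k + l : ℕ) : ℤ) - 1) = -((j : ℤ) + k + l + 1) * j - 2 * k * l := by
    unfold gexp; push_cast; ring
  rw [e3]
  have := qfact_ne j
  have := qfact_ne k
  have := qfact_ne l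
  field_simp

lemma cf_zero (n k l : ℕ) (h : n < k + l) : cf n k l = 0 := by
  unfold cf; rw [if_neg (by omega)]

lemma cD1 (j k l : ℕ) : qint ((j : ℤ) + l + 1) * qint ((j : ℤ) + k + 1) * cD j k l
    = qq ^ (3 * (j : ℤ) + k + l + 2 - j) * qint ((j : ℤ) + 1) ^ 2 * cD (j + 1) k l := by
  unfold cD
  rw [show j + 1 + l = j + l + 1 by ring, show j + 1 + k = j + k + 1 by ring, qfact_succ, qfact_succ, qfact_succ]
  push_cast
  have e : qq ^ (-((j : ℤ) + k + l + 1) * j - 2 * k * l) = qq ^ (3 * (j : ℤ) + k + l + 2 - j) * qq ^ (-((j : ℤ) + 1 + k + l + 1) * ((j : ℤ) + 1) - 2 * k * l) := by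
    rw [← zpow_add₀ qq_ne]; congr 1; ring
  rw [e]
  have := qfact_ne j
  have := qfact_ne k
  have := qfact_ne l
  have := qint_ne j
  generalize qq ^ (3 * (j : ℤ) + k + l + 2 - j) = X
  generalize qq ^ (-((j : ℤ) + 1 + k + l + 1) * ((j : ℤ) + 1) - 2 * k * l) = Y
  field_simp

lemma cD2 (j k l : ℕ) : qint ((j : ℤ) + l + 1) * cD j k l = qq ^ ((j : ℤ) + 2 * k) * qint ((l : ℤ) + 1) * cD j k (l + 1) := by
  unfold cD
  rw [← add_assoc, qfact_succ, qfact_succ]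
  push_cast
  have e : qq ^ (-((j : ℤ) + k + l + 1) * j - 2 * k * l) = qq ^ ((j : ℤ) + 2 * k) * qq ^ (-((j : ℤ) + k + (l + 1) + 1) * (j : ℤ) - 2 * k * (l + 1)) := by
    rw [← zpow_add₀ qq_ne]; congr 1; ring
  rw [e]
  have := qfact_ne j
  have := qfact_ne k
  have := qfact_ne l
  have := qint_ne l
  generalize qq ^ ((j : ℤ) + 2 * k) = X
  generalize qq ^ (-((j : ℤ) + k + (l + 1) + 1) * (j : ℤ) - 2 * k * (l + 1)) = Y
  field_simp

lemma cD_symm (j k l : ℕ) : cD j k l = cD j l k := by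
  unfold cD
  rw [show (-((j : ℤ) + k + l + 1) * j - 2 * k * l) = (-((j : ℤ) + l + k + 1) * j - 2 * l * k) by ring]
  ring

lemma cD3 (j k l : ℕ) : qint ((j : ℤ) + k + 1) * cD j k l = qq ^ ((j : ℤ) + 2 * l) * qint ((k : ℤ) + 1) * cD j (k + 1) l := by
  rw [cD_symm, cD2, cD_symm]

lemma qcore (j k l : ℤ) : qint (j + l) * qint (j + k) = qq ^ (l - k) * qint j ^ 2 + qq ^ (-j) * qint l * qint (j + k)
    + qq ^ j * qint k * qint (j + l) - qint k * qint l := by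
  unfold qint
  have hq := qq_ne
  have h2 := qq_sub_ne
  simp only [neg_add, zpow_add₀ hq, zpow_sub₀ hq, zpow_neg]
  have hj := qq_zpow_ne j
  have hk := qq_zpow_ne k
  have hl := qq_zpow_ne l
  generalize qq ^ j = J at *
  generalize qq ^ k = K at *
  generalize qq ^ l = L at *
  generalize hD : qq - qq⁻¹ = D at *
  field_simp
  ring

lemma inv_pow_zpow (m : ℕ) : (qq⁻¹) ^ m = qq ^ (-(m : ℤ)) := by
  rw [zpow_neg, zpow_natCast, inv_pow]

lemma cD_0k0 (k : ℕ) : cD 0 k 0 = 1 := by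
  unfold cD
  have := qfact_ne k
  simp [qfact_zero, this]

lemma cf_rec (n k l : ℕ) : cf (n + 2) k l = (qq⁻¹) ^ (2 * (n + 1 - l) + 2) * cf (n + 1) k l
       + sh (fun l => (qq⁻¹) ^ (2 * (n + 1 - l)) * cf (n + 1) k l) l
       + (qq⁻¹) ^ (2 * l) * sh (fun k => cf (n + 1) k l) k - (qq⁻¹) ^ (2 * (n + 1)) * sh (fun l => sh (fun k => cf n k l) k) l := by
  by_cases hkl : n + 2 < k + l
  · rw [cf_zero _ _ _ hkl, cf_zero _ _ _ (by omega)]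
    cases k with
    | zero =>
      cases l with
      | zero => simp [sh]
      | succ l => simp only [sh]; rw [cf_zero _ _ _ (by omega)]; simp
    | succ k =>
      cases l with
      | zero => simp only [sh]; rw [cf_zero _ _ _ (by omega)]; simp
      | succ l =>
        simp only [sh]; rw [cf_zero (n + 1) _ _ (by omega), cf_zero (n + 1) _ _ (by omega), cf_zero n _ _ (by omega)]; simp
  obtain ⟨j, hj⟩ := Nat.exists_eq_add_of_le (not_lt.mp hkl)
  have hX : cf (n + 2) k l = cD j k l := cfD _ _ _ _ (by omega)
  rw [hX]
  by_cases hjl : j + l = 0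
  · obtain rfl : j = 0 := by omega
    obtain rfl : l = 0 := by omega
    obtain rfl : k = n + 2 := by omega
    simp only [sh]
    rw [cf_zero _ _ _ (by omega), cfD (n + 1) 0 (n + 1) 0 (by omega), cD_0k0, cD_0k0]
    simp
  by_cases hjk : j + k = 0
  · obtain rfl : j = 0 := by omega
    obtain rfl : k = 0 := by omega
    obtain rfl : l = n + 2 := by omega
    simp only [sh]
    rw [cf_zero _ _ _ (by omega), cfD (n + 1) 0 0 (n + 1) (by omega), cD_symm, cD_0k0, cD_symm, cD_0k0]
    simp
  have n1 : qint ((j : ℤ) + l) ≠ 0 := by exact_mod_cast qint_ne' _ hjl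
  have n2 : qint ((j : ℤ) + k) ≠ 0 := by exact_mod_cast qint_ne' _ hjk
  have t1 : qint ((j : ℤ) + l) * qint ((j : ℤ) + k) * ((qq⁻¹) ^ (2 * (n + 1 - l) + 2) * cf (n + 1) k l)
      = qq ^ ((l : ℤ) - k) * qint j ^ 2 * cD j k l := by
    cases j with
    | zero => rw [cf_zero _ _ _ (by omega)]; simp [qint_zero]
    | succ j =>
      rw [cfD (n + 1) j k l (by omega), show n + 1 - l = j + k by omega, inv_pow_zpow]
      have h := cD1 j k l
      push_cast
      rw [show (j : ℤ) + 1 + l = j + l + 1 by ring, show (j : ℤ) + 1 + k = j + k + 1 by ring]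
      rw [mul_left_comm, h, ← mul_assoc, ← mul_assoc, ← zpow_add₀ qq_ne]
      congr 3; ring
  have t2 : qint ((j : ℤ) + l) * sh (fun l => (qq⁻¹) ^ (2 * (n + 1 - l)) * cf (n + 1) k l) l = qq ^ (-(j : ℤ)) * qint l * cD j k l := by
    cases l with
    | zero => simp [sh, qint_zero]
    | succ l =>
      simp only [sh]
      rw [cfD (n + 1) j k l (by omega), show n + 1 - l = j + k by omega, inv_pow_zpow]
      have h := cD2 j k l
      push_cast
      rw [← add_assoc]
      rw [mul_left_comm, h, ← mul_assoc, ← mul_assoc, ← zpow_add₀ qq_ne]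
      congr 3; ring
  have t3 : qint ((j : ℤ) + k) * ((qq⁻¹) ^ (2 * l) * sh (fun k => cf (n + 1) k l) k) = qq ^ (j : ℤ) * qint k * cD j k l := by
    cases k with
    | zero => simp [sh, qint_zero]
    | succ k =>
      simp only [sh]
      rw [cfD (n + 1) j k l (by omega), inv_pow_zpow]
      have h := cD3 j k l
      push_cast
      rw [← add_assoc]
      rw [mul_left_comm, h, ← mul_assoc, ← mul_assoc, ← zpow_add₀ qq_ne]
      congr 3; ring
  have t4 : qint ((j : ℤ) + l) * qint ((j : ℤ) + k) * ((qq⁻¹) ^ (2 * (n + 1)) * sh (fun l => sh (fun k => cf n k l) k) l)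
      = qint k * qint l * cD j k l := by
    cases l with
    | zero => simp [sh, qint_zero]
    | succ l =>
      cases k with
      | zero => simp [sh, qint_zero]
      | succ k =>
        simp only [sh]
        rw [cfD n j k l (by omega), inv_pow_zpow]
        have h := cD3 j k l
        have h' := cD2 j (k + 1) l
        push_cast at h' ⊢
        rw [← add_assoc, ← add_assoc]
        have e : qq ^ (-(2 * ((n : ℤ) + 1))) * qq ^ ((j : ℤ) + 2 * l) * qq ^ ((j : ℤ) + 2 * (k + 1)) = 1 := by
          rw [← zpow_add₀ qq_ne, ← zpow_add₀ qq_ne]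
          have : (n : ℤ) + 2 = k + 1 + (l + 1) + j := by exact_mod_cast hj
          rw [show (-(2 * ((n : ℤ) + 1)) + ((j : ℤ) + 2 * l) + ((j : ℤ) + 2 * (k + 1))) = 0 by linarith, zpow_zero]
        linear_combination qint ((j : ℤ) + l + 1) * qq ^ (-(2 * ((n : ℤ) + 1))) * h + qq ^ (-(2 * ((n : ℤ) + 1))) * qq ^ ((j : ℤ) + 2 * l) * qint ((k : ℤ) + 1) * h'
          + qint ((k : ℤ) + 1) * qint ((l : ℤ) + 1) * cD j (k + 1) (l + 1) * e
  have core := qcore j k l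
  apply mul_left_cancel₀ (mul_ne_zero n1 n2)
  linear_combination cD j k l * core - t1 - qint ((j : ℤ) + k) * t2 - qint ((j : ℤ) + l) * t3 + t4

lemma cf_000 : cf 0 0 0 = 1 := by rw [cfD 0 0 0 0 rfl, cD_0k0]

lemma cf_rec1 (k l : ℕ) : cf 1 k l = (qq⁻¹) ^ (2 * (0 - l) + 2) * cf 0 k l + sh (fun l => (qq⁻¹) ^ (2 * (0 - l)) * cf 0 k l) l
       + (qq⁻¹) ^ (2 * l) * sh (fun k => cf 0 k l) k := by
  by_cases hkl : 1 < k + l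
  · rw [cf_zero _ _ _ hkl, cf_zero _ _ _ (by omega)]
    cases k with
    | zero =>
      cases l with
      | zero => simp [sh]
      | succ l => simp only [sh]; rw [cf_zero _ _ _ (by omega)]; simp
    | succ k =>
      cases l with
      | zero => simp only [sh]; rw [cf_zero _ _ _ (by omega)]; simp
      | succ l =>
        simp only [sh]; rw [cf_zero _ _ _ (by omega), cf_zero _ _ _ (by omega)]; simp
  have h : (k = 0 ∧ l = 0) ∨ (k = 1 ∧ l = 0) ∨ (k = 0 ∧ l = 1) := by omega
  rcases h with ⟨rfl, rfl⟩ | ⟨rfl, rfl⟩ | ⟨rfl, rfl⟩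
  · rw [cf_000, cfD 1 1 0 0 rfl]
    simp only [sh, cD]
    rw [inv_pow_zpow]
    simp [qfact_succ, qfact_zero, qint_one]
  · rw [cf_zero 0 _ _ (by omega), cfD 1 0 1 0 rfl, cD_0k0]
    simp [sh, cf_000]
  · rw [cf_zero 0 _ _ (by omega), cfD 1 0 0 1 rfl, cD_symm, cD_0k0]
    simp [sh, cf_000]

lemma formula (n : ℕ) : us2 ^ n * gT qq zs (ps1 * ps0) n * us1 ^ n
    = ∑ k ∈ Finset.range (n + 1), ∑ l ∈ Finset.range (n + 1), cf n k l • gm us1 us2 ps1 ps0 n k l :=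
  gX relS relS2 cf cf_000 cf_zero cf_rec1 cf_rec n

lemma formula2 (n : ℕ) : us2 ^ n * (qq ^ (2 * (n : ℤ) * ((n : ℤ) - 1)) • gT qq zs (ps1 * ps0) n) * us1 ^ n
    = ∑ kl ∈ (Finset.range (n + 1) ×ˢ Finset.range (n + 1)).filter
          (fun kl => kl.1 + kl.2 ≤ n),
        (qq ^ gexp n kl.1 kl.2 * qbinom ((n : ℤ) - kl.1) kl.2 *
            qbinom ((n : ℤ) - kl.2) kl.1) •
          (ps1 ^ (n - kl.1) * us2 ^ (2 * kl.1) * us1 ^ (2 * kl.2) * ps0 ^ (n - kl.2)) := by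
  rw [mul_smul_comm, smul_mul_assoc, formula, ← Finset.sum_product', Finset.sum_filter, Finset.smul_sum]
  refine Finset.sum_congr rfl fun kl _ => ?_
  unfold cf gm
  split_ifs with h
  · rw [smul_smul, ← mul_assoc, ← mul_assoc, ← zpow_add₀ qq_ne]
    congr 4; ring
  · simp
end coef

/-- normalise the subtraction instance -/
lemma SR (x y : Sgen) : x - y = @HSub.hSub Sgen Sgen Sgen (@instHSub Sgen (SubNegMonoid.toSub (self := AddGroup.toSubNegMonoid (self := AddGroupWithOne.toAddGroup (self := Ring.toAddGroupWithOne))))) x y := rfl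
section
variable {K : Type*} [Field K] {R : Type*} [Ring R] [Algebra K R]
lemma gh_L (c d : K) (u v X Y E E' : R) : c • (u * X) - d • (v * Y) - c • (u * E) =
    c • (u * (X - E)) - d • (v * (Y - E')) - d • (v * E') := by
  simp only [mul_sub, smul_sub]; abel
lemma gh_R (c d : K) (u v X Y E E' : R) : c • (X * u) - d • (Y * v) - c • (E * u) =
    c • ((X - E) * u) - d • ((Y - E') * v) - d • (E' * v) := by
  simp only [sub_mul, smul_sub]; abel
lemma gh_3 (c : K) (x y : R) : x - c • y - x = - (c • y) := by abel
lemma gh_4 {x y : R} (h : x = y) : x - y = 0 := sub_eq_zero.2 h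
lemma gh_5 {x y z : R} (h : x + y = z) : x = z - y := eq_sub_of_add_eq h
end
lemma sh_4 {x y : Sgen} (h : x = y) : x - y = 0 := gh_4 (R := Sgen) (x := x) (y := y) h
lemma sh_5 {x y z : Sgen} (h : x + y = z) : x = z - y := gh_5 (R := Sgen) (x := x) (y := y) (z := z) h
section sigma
section
variable {K : Type*} [Field K] {R : Type*} [Ring R] [Algebra K R] {q : K} {u0 u1 u2 u3 p1 p0 z : R}
lemma gs_z (h : GRel q u0 u1 u2 u3) : u0 * (q ^ 6 • u3) - (q⁻¹) ^ 2 • ((q ^ 2 • u1) * (q ^ 4 • u2)) = q ^ 4 • (u3 * u0 - q ^ 2 • (u2 * u1)) := by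
  have hq := h.hq
  simp only [mul_smul_comm, smul_mul_assoc, h.r03, h.r12]
  match_scalars <;> field_simp <;> ring
lemma gs_p0 (h : GRel q u0 u1 u2 u3) : u0 * (q ^ 4 • u2) - (q⁻¹) ^ 2 • ((q ^ 2 • u1) * (q ^ 2 • u1)) = q ^ 2 • (u2 * u0 - q ^ 2 • u1 ^ 2) := by
  have hq := h.hq
  simp only [mul_smul_comm, smul_mul_assoc, h.r02, pow_two u1]
  match_scalars <;> field_simp <;> ring
lemma gs_p1 (h : GRel q u0 u1 u2 u3) : (q ^ 2 • u1) * (q ^ 6 • u3) - (q⁻¹) ^ 2 • ((q ^ 4 • u2) * (q ^ 4 • u2)) = q ^ 6 • (u3 * u1 - q ^ 2 • u2 ^ 2) := by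
  have hq := h.hq
  simp only [mul_smul_comm, smul_mul_assoc, h.r13, pow_two u2]
  match_scalars <;> field_simp <;> ring
lemma gs_P (hq : q ≠ 0) (h : GRel2 q u0 u1 u2 u3 p1 p0 z) : (q ^ 2 • p0) * (q ^ 6 • p1) = q ^ 4 • (p1 * p0) := by
  simp only [mul_smul_comm, smul_mul_assoc, h.hpp]
  match_scalars <;> field_simp
lemma gs_T (hq : q ≠ 0) (T1 T0 z P : R) (n : ℕ) : (q ^ (4 * (n + 1)) • T1) * (q ^ 4 • z) - q ^ 2 • ((q ^ (4 * n) • T0) * (q ^ 4 • P)) =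
    q ^ (4 * (n + 2)) • (T1 * z - (q⁻¹) ^ 2 • (T0 * P)) := by
  simp only [mul_smul_comm, smul_mul_assoc]
  match_scalars <;> field_simp <;> ring
end

variable {bar : F →+* F} {σ : Sgen → Sgen}

lemma sig_sub (h : SigmaHyp bar σ) (x y : Sgen) : σ (x - y) = σ x - σ y := by
  have := h.2.2.1 (x - y) y
  have e : x - y + y = x := sub_add_cancel x y
  rw [e] at this
  exact sh_5 this.symm

lemma bar_pow (h : SigmaHyp bar σ) (n : ℕ) : bar (qq ^ n) = (qq⁻¹) ^ n := by rw [map_pow, h.1]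

lemma sig_z (h : SigmaHyp bar σ) : σ zs = qq ^ 4 • zs := by
  obtain ⟨h1, h2, h3, h4, h5, s0, s1, s2, s3⟩ := id h
  unfold zs
  rw [sig_sub h, h4, h5, h4, s0, s1, s2, s3, bar_pow h]
  exact gs_z relS

lemma sig_p0 (h : SigmaHyp bar σ) : σ ps0 = qq ^ 2 • ps0 := by
  obtain ⟨h1, h2, h3, h4, h5, s0, s1, s2, s3⟩ := id h
  unfold ps0
  rw [sig_sub h, h4, h5, pow_two us1, h4, s0, s1, s2, bar_pow h, ← pow_two us1]
  exact gs_p0 relS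

lemma sig_p1 (h : SigmaHyp bar σ) : σ ps1 = qq ^ 6 • ps1 := by
  obtain ⟨h1, h2, h3, h4, h5, s0, s1, s2, s3⟩ := id h
  unfold ps1
  rw [sig_sub h, h4, h5, pow_two us2, h4, s1, s2, s3, bar_pow h, ← pow_two us2]
  exact gs_p1 relS

lemma sig_P (h : SigmaHyp bar σ) : σ (ps1 * ps0) = qq ^ 4 • (ps1 * ps0) := by
  rw [h.2.2.2.1, sig_p0 h, sig_p1 h]
  exact gs_P qq_ne relS2

lemma sig_one (h : SigmaHyp bar σ) : σ 1 = 1 := by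
  obtain ⟨x, hx⟩ := h.2.1.2 1
  have h4 := h.2.2.2.1 x 1
  rw [mul_one, hx, mul_one] at h4
  exact h4.symm

lemma sig_T (h : SigmaHyp bar σ) (n : ℕ) : σ (gT qq zs (ps1 * ps0) n) = qq ^ (4 * n) • gT qq zs (ps1 * ps0) n := by
  induction n using Nat.twoStepInduction with
  | zero => simp [gT, sig_one h]
  | one => simpa [gT] using sig_z h
  | more n ih1 ih2 =>
    rw [gT_right _ _ _ (gPz qq_ne relS2), ← gs_T qq_ne, ← ih1, ← ih2, ← sig_z h, ← sig_P h]
    have e : bar ((qq⁻¹) ^ 2) = qq ^ 2 := by rw [map_pow, map_inv₀, h.1, inv_inv]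
    rw [← gT_right _ _ _ (gPz qq_ne relS2)]
    simp only [gT]
    rw [sig_sub h, h.2.2.2.1, h.2.2.2.2.1, h.2.2.2.1, e]

/-- candidate -/
def Zs (n : ℕ) : Sgen := qq ^ (2 * (n : ℤ) * ((n : ℤ) - 1)) • gT qq zs (ps1 * ps0) n

lemma bar_zpow (h : SigmaHyp bar σ) (n : ℤ) : bar (qq ^ n) = qq ^ (-n) := by
  rw [map_zpow₀, h.1, inv_zpow, zpow_neg]

lemma sig_Z (h : SigmaHyp bar σ) (n : ℕ) : σ (Zs n) = qq ^ (-Nnum (n, 0, 0, n)) • Zs n := by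
  unfold Zs
  rw [h.2.2.2.2.1, sig_T h, bar_zpow h, smul_smul, smul_smul]
  rw [← zpow_natCast, ← zpow_add₀ qq_ne, ← zpow_add₀ qq_ne]
  congr 2
  simp only [Nnum]; push_cast; ring
end sigma

section lattice
/-- The `qℤ[q]`-lattice. -/
def M (a : Idx) : AddSubgroup Sgen := AddSubgroup.closure {x | ∃ (k : ℕ), ∃ b ∈ Sset a, x = qq ^ (k + 1) • Ee b}

lemma M_mem {a b : Idx} (hb : b ∈ Sset a) (m : ℤ) (hm : 1 ≤ m) : qq ^ m • Ee b ∈ M a := by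
  apply AddSubgroup.subset_closure
  refine ⟨(m - 1).toNat, b, hb, ?_⟩
  rw [← zpow_natCast]
  congr 2
  push_cast
  omega

lemma M_lift {a : Idx} (G : AddSubgroup Sgen) (f : Sgen →ₗ[F] Sgen)
    (hf : ∀ b ∈ Sset a, ∀ m : ℤ, 1 ≤ m → qq ^ m • f (Ee b) ∈ G) {x : Sgen} (hx : x ∈ M a) : f x ∈ G := by
  have : M a ≤ G.comap f.toAddMonoidHom := by
    unfold M
    rw [AddSubgroup.closure_le]
    rintro _ ⟨k, b, hb, rfl⟩
    have h := hf b hb (k + 1) (by omega)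
    simp only [SetLike.mem_coe, AddSubgroup.mem_comap, LinearMap.toAddMonoidHom_coe, map_smul]
    exact_mod_cast h
  exact this hx

lemma bexp_cast (a : Idx) : qq ^ bexp a = qq ^ ((bexp a : ℕ) : ℤ) := (zpow_natCast _ _).symm

lemma u3_Ee (a b c d : ℕ) : us3 * Ee (a, b, c, d) = qq ^ (-(a : ℤ)) • Ee (a + 1, b, c, d) := by
  simp only [Ee, mon, mul_smul_comm, smul_smul, pow_succ' us3, mul_assoc]
  rw [bexp_cast, bexp_cast, ← zpow_add₀ qq_ne]
  congr 2
  simp only [bexp, Nat.choose_succ_succ' a 1, Nat.choose_one_right]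
  push_cast; ring

lemma Ee_u0 (a b c d : ℕ) : Ee (a, b, c, d) * us0 = qq ^ (-(d : ℤ)) • Ee (a, b, c, d + 1) := by
  simp only [Ee, mon, smul_mul_assoc, smul_smul, pow_succ us0, mul_assoc]
  rw [bexp_cast, bexp_cast, ← zpow_add₀ qq_ne]
  congr 2
  simp only [bexp, Nat.choose_succ_succ' d 1, Nat.choose_one_right]
  push_cast; ring

section
variable {K : Type*} [Field K] {R : Type*} [Ring R] [Algebra K R] {q : K} {u0 u1 u2 u3 p1 p0 z : R}
lemma g_p1u2 (hr : GRel q u0 u1 u2 u3) (h : GRel2 q u0 u1 u2 u3 p1 p0 z) (hp : p1 = u3 * u1 - q ^ 2 • u2 ^ 2) (a b c d : ℕ) :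
    p1 * u2 * (u3 ^ a * u2 ^ b * u1 ^ c * u0 ^ d) = (q⁻¹) ^ (4 * a + 2 * b + 2) • (u3 ^ (a + 1) * u2 ^ (b + 1) * u1 ^ (c + 1) * u0 ^ d)
      - (q ^ 2 * (q⁻¹) ^ (4 * a)) • (u3 ^ a * u2 ^ (b + 3) * u1 ^ c * u0 ^ d) := by
  have e1 : p1 * u2 * u3 ^ a = (q⁻¹) ^ (4 * a) • (u3 ^ a * (p1 * u2)) := by
    rw [mul_assoc, qc_right hr.r23, mul_smul_comm, ← mul_assoc, qc_right h.h13, smul_mul_assoc, smul_smul, mul_assoc]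
    congr 1; ring
  have e2 : p1 * u2 ^ (b + 1) = (q⁻¹) ^ (2 * b + 2) • (u3 * u2 ^ (b + 1) * u1) - q ^ 2 • u2 ^ (b + 3) := by
    rw [hp, sub_mul, mul_assoc, qc_right hr.r12, mul_smul_comm, smul_mul_assoc, ← pow_add, mul_assoc]
    congr 2
    · ring
    · congr 1; ring
  calc _ = (p1 * u2 * u3 ^ a) * (u2 ^ b * (u1 ^ c * u0 ^ d)) := by simp only [mul_assoc]
    _ = (q⁻¹) ^ (4 * a) • (u3 ^ a * (p1 * u2 ^ (b + 1) * (u1 ^ c * u0 ^ d))) := by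
      rw [e1, smul_mul_assoc, pow_succ' u2]; simp only [mul_assoc]
    _ = _ := by
      rw [e2]
      simp only [sub_mul, mul_sub, smul_mul_assoc, mul_smul_comm, smul_sub, smul_smul, mul_assoc, pow_succ u3, pow_succ' u1]
      congr 2
      · ring
      · ring

lemma g_u1p0 (hr : GRel q u0 u1 u2 u3) (h : GRel2 q u0 u1 u2 u3 p1 p0 z) (hp : p0 = u2 * u0 - q ^ 2 • u1 ^ 2) (a b c d : ℕ) :
    (u3 ^ a * u2 ^ b * u1 ^ c * u0 ^ d) * (u1 * p0) = (q⁻¹) ^ (4 * d + 2 * c + 2) • (u3 ^ a * u2 ^ (b + 1) * u1 ^ (c + 1) * u0 ^ (d + 1))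
      - (q ^ 2 * (q⁻¹) ^ (4 * d)) • (u3 ^ a * u2 ^ b * u1 ^ (c + 3) * u0 ^ d) := by
  have hq := hr.hq
  have h00 : u0 * p0 = (q⁻¹) ^ 2 • (p0 * u0) := by
    rw [h.h00, smul_smul, ← mul_pow, inv_mul_cancel₀ hq, one_pow, one_smul]
  have e1 : u0 ^ d * (u1 * p0) = (q⁻¹) ^ (4 * d) • (u1 * p0 * u0 ^ d) := by
    rw [← mul_assoc, qc_left hr.r01, smul_mul_assoc, mul_assoc, qc_left h00, mul_smul_comm, smul_smul, mul_assoc]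
    congr 1; ring
  have e2 : u1 ^ (c + 1) * p0 = (q⁻¹) ^ (2 * c + 2) • (u2 * u1 ^ (c + 1) * u0) - q ^ 2 • u1 ^ (c + 3) := by
    rw [hp, mul_sub, ← mul_assoc, qc_left hr.r12, mul_smul_comm, smul_mul_assoc, ← pow_add]
    congr 2
    ring
  calc _ = u3 ^ a * u2 ^ b * u1 ^ c * (u0 ^ d * (u1 * p0)) := by simp only [mul_assoc]
    _ = (q⁻¹) ^ (4 * d) • (u3 ^ a * u2 ^ b * (u1 ^ (c + 1) * p0) * u0 ^ d) := by
      rw [e1, mul_smul_comm, pow_succ u1]; simp only [mul_assoc]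
    _ = _ := by
      rw [e2]
      simp only [sub_mul, mul_sub, smul_mul_assoc, mul_smul_comm, smul_sub, smul_smul, mul_assoc, pow_succ' u0, pow_succ u2]
      congr 2
      · ring
      · ring
end

lemma p1u2_Ee (a b c d : ℕ) : ps1 * us2 * Ee (a, b, c, d) =
    qq ^ (-5 * (a : ℤ) - 3 * b - c - 2) • Ee (a + 1, b + 1, c + 1, d) - qq ^ (-4 * (a : ℤ) - 3 * b - 1) • Ee (a, b + 3, c, d) := by
  simp only [Ee, mon, mul_smul_comm]
  rw [g_p1u2 relS relS2 rfl]
  simp only [smul_sub, smul_smul]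
  simp only [inv_pow_zpow, bexp_cast]
  rw [show qq ^ 2 = qq ^ (2 : ℤ) by norm_cast]
  simp only [← zpow_add₀ qq_ne]
  congr 3
  · simp only [bexp, Nat.choose_succ_succ' _ 1, Nat.choose_one_right]
    push_cast; ring
  · simp only [bexp, Nat.choose_succ_succ' _ 1, Nat.choose_one_right]
    push_cast; ring

lemma Ee_u1p0 (a b c d : ℕ) : Ee (a, b, c, d) * (us1 * ps0) =
    qq ^ (-5 * (d : ℤ) - 3 * c - b - 2) • Ee (a, b + 1, c + 1, d + 1) - qq ^ (-4 * (d : ℤ) - 3 * c - 1) • Ee (a, b, c + 3, d) := by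
  simp only [Ee, mon, smul_mul_assoc]
  rw [g_u1p0 relS relS2 rfl]
  simp only [smul_sub, smul_smul]
  simp only [inv_pow_zpow, bexp_cast]
  rw [show qq ^ 2 = qq ^ (2 : ℤ) by norm_cast]
  simp only [← zpow_add₀ qq_ne]
  congr 3
  · simp only [bexp, Nat.choose_succ_succ' _ 1, Nat.choose_one_right]
    push_cast; ring
  · simp only [bexp, Nat.choose_succ_succ' _ 1, Nat.choose_one_right]
    push_cast; ring

lemma Sset_iff (a3 a2 a1 a0 b3 b2 b1 b0 : ℕ) : (b3, b2, b1, b0) ∈ Sset (a3, a2, a1, a0) ↔ ∃ s r : ℕ, 0 < s + r ∧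
    (b3 : ℤ) = a3 - s ∧ (b2 : ℤ) = a2 + 2 * s - r ∧ (b1 : ℤ) = a1 - s + 2 * r ∧ (b0 : ℤ) = a0 - r := by
  simp only [Sset, tri, Set.mem_ofPred_eq, ne_eq, Prod.mk.injEq]
  constructor
  · rintro ⟨⟨s, r, h1, h2, h3, h4⟩, h⟩
    exact ⟨s, r, by omega, h1, h2, h3, h4⟩
  · rintro ⟨s, r, h0, h1, h2, h3, h4⟩
    exact ⟨⟨s, r, h1, h2, h3, h4⟩, by omega⟩

/-- candidate -/
def Cs (n : ℕ) : Sgen := qq ^ (2 * (n : ℤ) ^ 2 - n) • gy qq us3 us2 ps1 zs (ps1 * ps0) n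

lemma Cs_succ (n : ℕ) : Cs (n + 1) = qq ^ ((n : ℤ) + 1) • (us3 * Zs (n + 1)) - qq ^ (5 * (n : ℤ) + 3) • (ps1 * us2 * Zs n) := by
  unfold Cs Zs
  simp only [gy, smul_sub, mul_smul_comm, smul_smul]
  rw [show qq ^ 2 = qq ^ (2 : ℤ) by norm_cast]
  simp only [← zpow_add₀ qq_ne]
  congr 3 <;> (push_cast; ring)

lemma Zs_succ (n : ℕ) : Zs (n + 2) = qq ^ ((n : ℤ) + 1) • (Cs (n + 1) * us0) - qq ^ (5 * (n : ℤ) + 4) • (Cs n * (us1 * ps0)) := by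
  have h := gT_y qq_ne relS2 n
  have e : Zs (n + 2) = qq ^ (2 * ((n : ℤ) + 1) ^ 2) • (qq ^ (2 * (n + 1)) • gT qq zs (ps1 * ps0) (n + 2)) := by
    unfold Zs
    rw [smul_smul, ← zpow_natCast, ← zpow_add₀ qq_ne]
    congr 2; push_cast; ring
  rw [e, h]
  unfold Cs
  simp only [SR, smul_sub, smul_mul_assoc, smul_smul]
  rw [show qq ^ 2 = qq ^ (2 : ℤ) by norm_cast]
  simp only [← zpow_add₀ qq_ne]
  congr 3
  · push_cast; ring
  · ring

/-- left action -/
def actL (c : F) (x : Sgen) : Sgen →ₗ[F] Sgen := c • LinearMap.mulLeft F x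
/-- right action -/
def actR (c : F) (x : Sgen) : Sgen →ₗ[F] Sgen := c • LinearMap.mulRight F x

lemma stepC1 (n : ℕ) (b : Idx) (hb : b ∈ Sset (n + 1, 0, 0, n + 1)) (m : ℤ) (hm : 1 ≤ m) :
    qq ^ m • (qq ^ ((n : ℤ) + 1) • (us3 * Ee b)) ∈ M (n + 2, 0, 0, n + 1) := by
  obtain ⟨b3, b2, b1, b0⟩ := b
  rw [Sset_iff] at hb
  obtain ⟨s, r, h0, h1, h2, h3, h4⟩ := hb
  rw [u3_Ee, smul_smul, smul_smul, ← zpow_add₀ qq_ne, ← zpow_add₀ qq_ne]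
  apply M_mem
  · rw [Sset_iff]
    refine ⟨s, r, h0, ?_, ?_, ?_, ?_⟩ <;> push_cast at * <;> omega
  · push_cast at *; omega

lemma stepC2 (n : ℕ) (b : Idx) (hb : tri (n, 0, 0, n) b) (m : ℤ) (hm : 0 ≤ m) :
    qq ^ m • (qq ^ (5 * (n : ℤ) + 3) • (ps1 * us2 * Ee b)) ∈ M (n + 2, 0, 0, n + 1) := by
  obtain ⟨b3, b2, b1, b0⟩ := b
  obtain ⟨s, r, h1, h2, h3, h4⟩ := hb
  simp only at h1 h2 h3 h4
  rw [p1u2_Ee]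
  simp only [SR, smul_sub, smul_smul, ← zpow_add₀ qq_ne]
  apply AddSubgroup.sub_mem
  · apply M_mem
    · rw [Sset_iff]
      refine ⟨s + 1, r + 1, by omega, ?_, ?_, ?_, ?_⟩ <;> push_cast at * <;> omega
    · push_cast at *; omega
  · apply M_mem
    · rw [Sset_iff]
      refine ⟨s + 2, r + 1, by omega, ?_, ?_, ?_, ?_⟩ <;> push_cast at * <;> omega
    · push_cast at *; omega

lemma stepZ1 (n : ℕ) (b : Idx) (hb : b ∈ Sset (n + 2, 0, 0, n + 1)) (m : ℤ) (hm : 1 ≤ m) :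
    qq ^ m • (qq ^ ((n : ℤ) + 1) • (Ee b * us0)) ∈ M (n + 2, 0, 0, n + 2) := by
  obtain ⟨b3, b2, b1, b0⟩ := b
  rw [Sset_iff] at hb
  obtain ⟨s, r, h0, h1, h2, h3, h4⟩ := hb
  rw [Ee_u0, smul_smul, smul_smul, ← zpow_add₀ qq_ne, ← zpow_add₀ qq_ne]
  apply M_mem
  · rw [Sset_iff]
    refine ⟨s, r, h0, ?_, ?_, ?_, ?_⟩ <;> push_cast at * <;> omega
  · push_cast at *; omega

lemma stepZ2 (n : ℕ) (b : Idx) (hb : tri (n + 1, 0, 0, n) b) (m : ℤ) (hm : 0 ≤ m) :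
    qq ^ m • (qq ^ (5 * (n : ℤ) + 4) • (Ee b * (us1 * ps0))) ∈ M (n + 2, 0, 0, n + 2) := by
  obtain ⟨b3, b2, b1, b0⟩ := b
  obtain ⟨s, r, h1, h2, h3, h4⟩ := hb
  simp only at h1 h2 h3 h4
  rw [Ee_u1p0]
  simp only [SR, smul_sub, smul_smul, ← zpow_add₀ qq_ne]
  apply AddSubgroup.sub_mem
  · apply M_mem
    · rw [Sset_iff]
      refine ⟨s + 1, r + 1, by omega, ?_, ?_, ?_, ?_⟩ <;> push_cast at * <;> omega
    · push_cast at *; omega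
  · apply M_mem
    · rw [Sset_iff]
      refine ⟨s + 1, r + 2, by omega, ?_, ?_, ?_, ?_⟩ <;> push_cast at * <;> omega
    · push_cast at *; omega

lemma tri_refl (a : Idx) : tri a a := ⟨0, 0, by simp, by simp, by simp, by simp⟩

lemma stepC (n : ℕ) (h0 : Zs n - Ee (n, 0, 0, n) ∈ M (n, 0, 0, n))
    (h1 : Zs (n + 1) - Ee (n + 1, 0, 0, n + 1) ∈ M (n + 1, 0, 0, n + 1)) :
    Cs (n + 1) - Ee (n + 2, 0, 0, n + 1) ∈ M (n + 2, 0, 0, n + 1) := by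
  have k1 := M_lift (M (n + 2, 0, 0, n + 1)) (actL (qq ^ ((n : ℤ) + 1)) us3) (stepC1 n) h1
  have k2 := M_lift (M (n + 2, 0, 0, n + 1)) (actL (qq ^ (5 * (n : ℤ) + 3)) (ps1 * us2))
    (fun b hb m hm => stepC2 n b hb.1 m (by omega)) h0
  have k3 := stepC2 n _ (tri_refl _) 0 le_rfl
  rw [zpow_zero, one_smul] at k3
  have k4 : Ee (n + 2, 0, 0, n + 1) = qq ^ ((n : ℤ) + 1) • (us3 * Ee (n + 1, 0, 0, n + 1)) := by
    rw [u3_Ee, smul_smul, ← zpow_add₀ qq_ne]; simp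
  rw [Cs_succ, k4]
  have := AddSubgroup.sub_mem _ (AddSubgroup.sub_mem _ k1 k2) k3
  convert this using 1
  exact gh_L (K := F) (R := Sgen) _ _ _ _ _ _ _ _

lemma stepZ (n : ℕ) (h0 : Cs n - Ee (n + 1, 0, 0, n) ∈ M (n + 1, 0, 0, n))
    (h1 : Cs (n + 1) - Ee (n + 2, 0, 0, n + 1) ∈ M (n + 2, 0, 0, n + 1)) :
    Zs (n + 2) - Ee (n + 2, 0, 0, n + 2) ∈ M (n + 2, 0, 0, n + 2) := by
  have k1 := M_lift (M (n + 2, 0, 0, n + 2)) (actR (qq ^ ((n : ℤ) + 1)) us0) (stepZ1 n) h1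
  have k2 := M_lift (M (n + 2, 0, 0, n + 2)) (actR (qq ^ (5 * (n : ℤ) + 4)) (us1 * ps0))
    (fun b hb m hm => stepZ2 n b hb.1 m (by omega)) h0
  have k3 := stepZ2 n _ (tri_refl _) 0 le_rfl
  rw [zpow_zero, one_smul] at k3
  have k4 : Ee (n + 2, 0, 0, n + 2) = qq ^ ((n : ℤ) + 1) • (Ee (n + 2, 0, 0, n + 1) * us0) := by
    rw [Ee_u0, smul_smul, ← zpow_add₀ qq_ne]; simp
  rw [Zs_succ, k4]
  have := AddSubgroup.sub_mem _ (AddSubgroup.sub_mem _ k1 k2) k3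
  convert this using 1
  exact gh_R (K := F) (R := Sgen) _ _ _ _ _ _ _ _

lemma intZC (n : ℕ) : Zs n - Ee (n, 0, 0, n) ∈ M (n, 0, 0, n) ∧ Zs (n + 1) - Ee (n + 1, 0, 0, n + 1) ∈ M (n + 1, 0, 0, n + 1)
    ∧ Cs n - Ee (n + 1, 0, 0, n) ∈ M (n + 1, 0, 0, n) := by
  induction n with
  | zero =>
    refine ⟨?_, ?_, ?_⟩
    · convert AddSubgroup.zero_mem _
      apply sh_4
      simp [Zs, Ee, gT, bexp, mon]
    · have : Zs (0 + 1) - Ee (0 + 1, 0, 0, 0 + 1) = - (qq ^ (2 : ℤ) • Ee (0, 1, 1, 0)) := by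
        simp only [Zs, Ee, gT, bexp, mon, zs]
        simp
        norm_cast
        exact gh_3 (K := F) (R := Sgen) _ _ _
      rw [this]
      apply AddSubgroup.neg_mem
      apply M_mem _ _ (by norm_num)
      rw [Sset_iff]
      exact ⟨1, 1, by norm_num, by norm_num, by norm_num, by norm_num, by norm_num⟩
    · convert AddSubgroup.zero_mem _
      apply sh_4
      simp [Cs, Ee, gy, bexp, mon]
  | succ n ih =>
    obtain ⟨i1, i2, i3⟩ := ih
    have i4 := stepC n i1 i2
    exact ⟨i2, stepZ n i3 i4, i4⟩
end lattice

section uniq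
variable {K : Type*} [Field K] {V : Type*} [AddCommGroup V] [Module K V] {ι : Type*}

/-- coefficient in `qℤ[q]` -/
def coe1 (q : K) (p : Polynomial ℤ) : K := q * Polynomial.eval₂ (Int.castRingHom K) q p

lemma coe1_bar (bar : K →+* K) {q : K} (hq : q ≠ 0) (hinj : ∀ f : Polynomial ℤ, Polynomial.eval₂ (Int.castRingHom K) q f = 0 → f = 0)
    (hb : bar q = q⁻¹) (f : Polynomial ℤ) (h : bar (coe1 q f) = coe1 q f) : f = 0 := by
  by_contra hf
  unfold coe1 at h
  rw [map_mul, hb, Polynomial.hom_eval₂, hb] at h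
  have e1 : bar.comp (Int.castRingHom K) = Int.castRingHom K := RingHom.ext_int _ _
  rw [e1] at h
  let _i : Invertible (q⁻¹) := invertibleOfNonzero (inv_ne_zero hq)
  have e2 := Polynomial.eval₂_reverse_mul_pow (Int.castRingHom K) (q⁻¹) f
  rw [invOf_eq_inv, inv_inv] at e2
  rw [← e2, inv_pow] at h
  have e3 : Polynomial.eval₂ (Int.castRingHom K) q (f.reverse - Polynomial.X ^ (f.natDegree + 2) * f) = 0 := by
    rw [Polynomial.eval₂_sub, Polynomial.eval₂_mul, Polynomial.eval₂_X_pow, sub_eq_zero]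
    field_simp at h
    rw [h]; ring
  have e4 := hinj _ e3
  rw [sub_eq_zero] at e4
  have d1 := Polynomial.reverse_natDegree_le f
  rw [e4, mul_comm, Polynomial.natDegree_mul_X_pow _ hf] at d1
  omega

variable {q : K} {E B : ι → V} {w : ι → ℕ} {S : ι → Set ι} {lam : ι → K} {bar : K →+* K} {σ : V →+ V}

lemma sig_span (hσ : ∀ (c : K) (x : V), σ (c • x) = bar c • σ x) (T : Set V) (W : Submodule K V)
    (h : ∀ x ∈ T, σ x ∈ W) {x : V} (hx : x ∈ Submodule.span K T) : σ x ∈ W := by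
  induction hx using Submodule.span_induction with
  | mem x hx => exact h x hx
  | zero => rw [map_zero]; exact W.zero_mem
  | add x y _ _ h1 h2 => rw [map_add]; exact W.add_mem h1 h2
  | smul c x _ h1 => rw [hσ]; exact W.smul_mem _ h1

lemma sig_low (hσ : ∀ (c : K) (x : V), σ (c • x) = bar c • σ x)
    (hB : ∀ a, B a - E a ∈ Submodule.span K (E '' {c | w c < w a}))
    (hBs : ∀ a, σ (B a) = lam a • B a) (k : ℕ) : ∀ a, w a = k → σ (E a) - lam a • E a ∈ Submodule.span K (E '' {c | w c < w a}) := by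
  induction k using Nat.strong_induction_on with
  | _ k ih =>
    intro a ha
    have h1 : σ (B a - E a) ∈ Submodule.span K (E '' {c | w c < w a}) := by
      refine sig_span hσ _ _ ?_ (hB a)
      rintro _ ⟨c, hc, rfl⟩
      have hc' : w c < w a := hc
      have h2 := ih (w c) (by omega) c rfl
      have h3 : Submodule.span K (E '' {d | w d < w c}) ≤ Submodule.span K (E '' {d | w d < w a}) := by
        apply Submodule.span_mono
        apply Set.image_mono
        intro d hd
        exact lt_trans hd hc'
      have h4 : E c ∈ Submodule.span K (E '' {d | w d < w a}) := Submodule.subset_span ⟨c, hc, rfl⟩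
      have := Submodule.add_mem _ (h3 h2) (Submodule.smul_mem _ (lam c) h4)
      rwa [sub_add_cancel] at this
    have h2 := Submodule.sub_mem _ (Submodule.smul_mem _ (lam a) (hB a)) h1
    rw [map_sub, hBs, smul_sub] at h2
    convert h2 using 1
    abel

lemma uniq_main (hq : q ≠ 0) (hinj : ∀ f : Polynomial ℤ, Polynomial.eval₂ (Int.castRingHom K) q f = 0 → f = 0)
    (hb : bar q = q⁻¹) (hσ : ∀ (c : K) (x : V), σ (c • x) = bar c • σ x)
    (hE : LinearIndependent K E) (hlow : ∀ a, σ (E a) - lam a • E a ∈ Submodule.span K (E '' {c | w c < w a}))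
    {l : K} (hl : l ≠ 0) (φ : ι →₀ Polynomial ℤ) (hφ : ∀ b ∈ φ.support, lam b = l)
    (hs : σ (φ.sum fun b p => coe1 q p • E b) = l • (φ.sum fun b p => coe1 q p • E b)) : φ = 0 := by
  classical
  by_contra hne
  obtain ⟨b0, hb0, hmax⟩ := Finset.exists_max_image φ.support w (Finsupp.support_nonempty_iff.2 hne)
  set N := Submodule.span K (E '' {c | w c ≤ w b0 ∧ c ≠ b0}) with hN
  have hsub : ∀ c, w c ≤ w b0 → Submodule.span K (E '' {d | w d < w c}) ≤ N := by
    intro c hc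
    apply Submodule.span_mono
    apply Set.image_mono
    intro d hd
    have hd' : w d < w c := hd
    refine ⟨by omega, ?_⟩
    rintro rfl
    omega
  have hN2 : ∀ x ∈ N, σ x ∈ N := by
    intro x hx
    refine sig_span hσ _ _ ?_ hx
    rintro _ ⟨c, ⟨hc1, hc2⟩, rfl⟩
    have h4 : E c ∈ N := Submodule.subset_span ⟨c, ⟨hc1, hc2⟩, rfl⟩
    have := Submodule.add_mem _ (hsub c hc1 (hlow c)) (Submodule.smul_mem _ (lam c) h4)
    rwa [sub_add_cancel] at this
  set R := ∑ b ∈ φ.support.erase b0, coe1 q (φ b) • E b with hR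
  have hsum : (φ.sum fun b p => coe1 q p • E b) = coe1 q (φ b0) • E b0 + R := by
    rw [Finsupp.sum, ← Finset.add_sum_erase _ _ hb0]
  have hRN : R ∈ N := by
    apply Submodule.sum_mem
    intro b hb
    rw [Finset.mem_erase] at hb
    exact Submodule.smul_mem _ _ (Submodule.subset_span ⟨b, ⟨hmax b hb.2, hb.1⟩, rfl⟩)
  rw [hsum, map_add, hσ] at hs
  have h1 := hsub b0 le_rfl (hlow b0)
  rw [hφ b0 hb0] at h1
  have h2 : ((l * (coe1 q (φ b0) - bar (coe1 q (φ b0)))) • E b0) ∈ N := by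
    have := Submodule.sub_mem _ (Submodule.add_mem _ (Submodule.smul_mem _ (bar (coe1 q (φ b0))) h1) (hN2 R hRN)) (Submodule.smul_mem _ l hRN)
    convert this using 1
    rw [smul_sub, sub_add_eq_add_sub, hs]
    module
  have h3 : l * (coe1 q (φ b0) - bar (coe1 q (φ b0))) = 0 := by
    by_contra hc
    have h4 := (Submodule.smul_mem_iff _ hc).1 h2
    refine (linearIndependent_iff_notMem_span.1 hE) b0 (Submodule.span_mono ?_ h4)
    apply Set.image_mono
    rintro d ⟨_, hd⟩
    exact ⟨Set.mem_univ _, hd⟩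
  rcases mul_eq_zero.1 h3 with h | h
  · exact hl h
  · exact (Finsupp.mem_support_iff.1 hb0) (coe1_bar bar hq hinj hb _ (sub_eq_zero.1 h).symm)
end uniq

/-- weight -/
def wt (b : Idx) : ℕ := b.1 + b.2.2.2

lemma wt_lt {a b : Idx} (h : b ∈ Sset a) : wt b < wt a := by
  obtain ⟨a3, a2, a1, a0⟩ := a
  obtain ⟨b3, b2, b1, b0⟩ := b
  rw [Sset_iff] at h
  obtain ⟨s, r, h0, h1, h2, h3, h4⟩ := h
  simp only [wt]
  omega

lemma Nnum_eq {a b : Idx} (h : b ∈ Sset a) : Nnum b = Nnum a := by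
  obtain ⟨a3, a2, a1, a0⟩ := a
  obtain ⟨b3, b2, b1, b0⟩ := b
  rw [Sset_iff] at h
  obtain ⟨s, r, h0, h1, h2, h3, h4⟩ := h
  simp only [Nnum, h1, h2, h3, h4]
  ring

lemma Ee_indep (h : LinearIndependent F mon) : LinearIndependent F Ee := by
  have := h.units_smul (fun a => Units.mk0 (qq ^ bexp a) (pow_ne_zero _ qq_ne))
  exact this

lemma qq_inj (f : Polynomial ℤ) (h : Polynomial.eval₂ (Int.castRingHom F) qq f = 0) : f = 0 := by
  have h2 : Polynomial.aeval qq (f.map (Int.castRingHom ℚ)) = 0 := by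
    rw [Polynomial.aeval_def, Polynomial.eval₂_map]
    rw [← h]
    congr 1
    exact RingHom.ext_int _ _
  by_contra hf
  refine aeval_qq_ne _ ?_ h2
  rwa [Ne, Polynomial.map_eq_zero_iff (Int.cast_injective)]

/-- lattice map -/
def Latm (φ : Idx →₀ Polynomial ℤ) : Sgen := φ.sum fun b p => coe1 qq p • Ee b

lemma Latm_single (b : Idx) (p : Polynomial ℤ) : Latm (Finsupp.single b p) = coe1 qq p • Ee b := by
  unfold Latm
  rw [Finsupp.sum_single_index]
  simp [coe1]

lemma Latm_add (x y : Idx →₀ Polynomial ℤ) : Latm (x + y) = Latm x + Latm y := by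
  unfold Latm
  apply Finsupp.sum_add_index'
  · intro a; simp [coe1]
  · intro a p r
    rw [← add_smul]
    congr 1
    simp [coe1, mul_add]

/-- lattice hom -/
def LatH : (Idx →₀ Polynomial ℤ) →+ Sgen := AddMonoidHom.mk' Latm Latm_add

lemma M_Lat {a : Idx} {x : Sgen} (hx : x ∈ M a) : ∃ φ : Idx →₀ Polynomial ℤ, (↑φ.support : Set Idx) ⊆ Sset a ∧ x = LatH φ := by
  classical
  unfold M at hx
  induction hx using AddSubgroup.closure_induction with
  | mem x hx =>
    obtain ⟨k, b, hb, rfl⟩ := hx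
    refine ⟨Finsupp.single b (Polynomial.X ^ k), ?_, ?_⟩
    · intro c hc
      have := Finsupp.support_single_subset hc
      rw [Finset.mem_singleton] at this
      rwa [this]
    · refine Eq.trans ?_ (Latm_single _ _).symm
      simp [coe1, pow_succ']
  | zero => exact ⟨0, by simp, (map_zero LatH).symm⟩
  | add x y _ _ h1 h2 =>
    obtain ⟨φ, h1, rfl⟩ := h1
    obtain ⟨ψ, h2, rfl⟩ := h2
    refine ⟨φ + ψ, ?_, (map_add LatH _ _).symm⟩
    intro c hc
    rcases Finset.mem_union.1 (Finsupp.support_add hc) with h | h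
    · exact h1 h
    · exact h2 h
  | neg x _ h =>
    obtain ⟨φ, h1, rfl⟩ := h
    refine ⟨-φ, ?_, (map_neg LatH _).symm⟩
    rwa [Finsupp.support_neg]

lemma gsub3 {R : Type*} [AddCommGroup R] {x y z u v : R} (h1 : x - y = u) (h2 : z - y = v) : x - z = u - v := by
  rw [← h1, ← h2]; abel

/-- `σ` as an additive hom -/
def sigH (σ : Sgen → Sgen) (h : ∀ x y : Sgen, σ (x + y) = σ x + σ y) : Sgen →+ Sgen := AddMonoidHom.mk' σ h

lemma B_span {B : Idx → Sgen} (a : Idx) (h : cond1 B a) : B a - Ee a ∈ Submodule.span F (Ee '' {c | wt c < wt a}) := by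
  obtain ⟨χ, hχ, e⟩ := h
  rw [e]
  apply Submodule.sum_mem
  intro b hb
  exact Submodule.smul_mem _ _ (Submodule.subset_span ⟨b, wt_lt (hχ hb), rfl⟩)

lemma B_low (bar : F →+* F) (σ : Sgen → Sgen) (B : Idx → Sgen)
    (hσ : SigmaHyp bar σ) (hB : DCB bar σ B) (a : Idx) :
    sigH σ hσ.2.2.1 (Ee a) - qq ^ (-Nnum a) • Ee a ∈ Submodule.span F (Ee '' {c | wt c < wt a}) :=
  sig_low (σ := sigH σ hσ.2.2.1) (bar := bar) (lam := fun a => qq ^ (-Nnum a)) (B := B) hσ.2.2.2.2.1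
    (fun a => B_span a (hB a).1) (fun a => (hB a).2) _ a rfl

lemma B_dif (bar : F →+* F) (σ : Sgen → Sgen) (B : Idx → Sgen)
    (hB : DCB bar σ B) (n : ℕ) : ∃ φ : Idx →₀ Polynomial ℤ, (∀ b ∈ φ.support, b ∈ Sset (n, 0, 0, n)) ∧
    B (n, 0, 0, n) - Zs n = LatH φ := by
  classical
  obtain ⟨φ, hφ, e1⟩ := (hB (n, 0, 0, n)).1
  obtain ⟨ψ, hψ, e2⟩ := M_Lat (intZC n).1
  have e1' : B (n, 0, 0, n) - Ee (n, 0, 0, n) = LatH φ := e1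
  refine ⟨φ - ψ, ?_, (gsub3 (R := Sgen) e1' e2).trans (map_sub LatH φ ψ).symm⟩
  intro b hb
  rcases Finset.mem_union.1 (Finsupp.support_sub hb) with h | h
  · exact hφ h
  · exact hψ h

lemma g_ssub (K : Type*) {V : Type*} [Field K] [AddCommGroup V] [Module K V] (c : K) (x y : V) : c • x - c • y = c • (x - y) := (smul_sub c x y).symm

lemma B_sig (bar : F →+* F) (σ : Sgen → Sgen) (B : Idx → Sgen)
    (hσ : SigmaHyp bar σ) (hB : DCB bar σ B) (n : ℕ) :
    σ (B (n, 0, 0, n) - Zs n) = qq ^ (-Nnum (n, 0, 0, n)) • (B (n, 0, 0, n) - Zs n) := by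
  have := sig_sub hσ (B (n, 0, 0, n)) (Zs n)
  rw [(hB _).2, sig_Z hσ] at this
  exact this.trans (g_ssub F (V := Sgen) _ _ _)

lemma phi_zero (bar : F →+* F) (σ : Sgen → Sgen) (B : Idx → Sgen)
    (hPBW : LinearIndependent F mon) (hσ : SigmaHyp bar σ) (hB : DCB bar σ B) (n : ℕ) (φ : Idx →₀ Polynomial ℤ)
    (hφ : ∀ b ∈ φ.support, qq ^ (-Nnum b) = qq ^ (-Nnum (n, 0, 0, n)))
    (hs : sigH σ hσ.2.2.1 (φ.sum fun b p => coe1 qq p • Ee b) = qq ^ (-Nnum (n, 0, 0, n)) • (φ.sum fun b p => coe1 qq p • Ee b)) : φ = 0 := by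
  have hl := B_low bar σ B hσ hB
  have hz : qq ^ (-Nnum (n, 0, 0, n)) ≠ 0 := zpow_ne_zero _ qq_ne
  have hE := Ee_indep hPBW
  generalize qq ^ (-Nnum (n, 0, 0, n)) = l at *
  have hL := hσ.2.2.2.2.1
  have h1 := hσ.1
  clear hPBW hB B
  refine uniq_main (V := Sgen) (σ := sigH σ hσ.2.2.1) (bar := bar) (E := Ee) (w := wt) (lam := fun a => qq ^ (-Nnum a)) (l := l) (q := qq)
    qq_ne qq_inj h1 ?_ ?_ ?_ hz φ ?_ ?_
  · exact hL
  · exact hE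
  · exact hl
  · exact hφ
  · exact hs

lemma B_eq (bar : F →+* F) (σ : Sgen → Sgen) (B : Idx → Sgen)
    (hPBW : LinearIndependent F mon) (hσ : SigmaHyp bar σ) (hB : DCB bar σ B) (n : ℕ) : B (n, 0, 0, n) = Zs n := by
  obtain ⟨φ, hφ, e⟩ := B_dif bar σ B hB n
  have hs := B_sig bar σ B hσ hB n
  rw [e] at hs
  have h0 : φ = 0 := phi_zero bar σ B hPBW hσ hB n φ (fun b hb => by rw [Nnum_eq (hφ b hb)]) hs
  rw [h0] at e
  have e4 : B (n, 0, 0, n) - Zs n = 0 := e.trans (map_zero LatH)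
  exact sub_eq_zero (G := Sgen) |>.1 e4

/-- For every natural number `n ≥ 0`,
`u₂ⁿ · B[n,0,0,n] · u₁ⁿ = Σ_{(k,l)} q^{g(n,k,l)} [n−k; l][n−l; k]
p₁^{n−k} u₂^{2k} u₁^{2l} p₀^{n−l}`, where the sum runs over all pairs
`(k,l) ∈ ℕ²` with `k + l ≤ n`. -/
theorem stmt18 (bar : F →+* F) (σ : Sgen → Sgen) (B : Idx → Sgen)
    (hPBW : LinearIndependent F mon) (hσ : SigmaHyp bar σ) (hB : DCB bar σ B) (n : ℕ) :
    us2 ^ n * B (n, 0, 0, n) * us1 ^ n =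
      ∑ kl ∈ (Finset.range (n + 1) ×ˢ Finset.range (n + 1)).filter
          (fun kl => kl.1 + kl.2 ≤ n),
        (qq ^ gexp n kl.1 kl.2 * qbinom ((n : ℤ) - kl.1) kl.2 *
            qbinom ((n : ℤ) - kl.2) kl.1) •
          (ps1 ^ (n - kl.1) * us2 ^ (2 * kl.1) * us1 ^ (2 * kl.2) * ps0 ^ (n - kl.2)) := by
  rw [B_eq bar σ B hPBW hσ hB n]
  exact formula2 n
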